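/- Let α, β be nonzero real numbers, 0 < s < 1 and C ≥ 1. There exist constants ε = ε(s) > 0, δ₀ = δ₀(α, β, s, C) > 0, K = K(α, β, s) > 0 and an exponent e = e(s) > 0 such that the following holds for all 0 < δ ≤ δ₀. Let A ⊂ [0,1] be any δ-separated set of cardinality ⌈δ^{-s}⌉ such that #(A ∩ I) ≤ C·l^s·(#A) for every interval I of length l ≥ δ. Then for every G ⊆ A × A with #G ≥ δ^{ε}(#A)², one has E_δ(A +_G A) + E_δ({αx² + βy² : (x,y) ∈ G}) ≥ K·C^{-e}·δ^{-ε}·(#A). -/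

import Mathlib

open MeasureTheory Real
open scoped Classical

/-- `E_δ(A)`: the δ-covering number of `A ⊆ ℝ`, the minimal number of sets of
diameter at most `δ` needed to cover `A`. -/
noncomputable def coverNum (δ : ℝ) (A : Set ℝ) : ℕ :=
  sInf {m : ℕ | ∃ F : Finset (Set ℝ), F.card = m ∧
    (∀ U ∈ F, EMetric.diam U ≤ ENNReal.ofReal δ) ∧ A ⊆ ⋃ U ∈ F, U}

/-- If equal values of `f` force values of `g` to be within `c`, then `g` takes at most
`2c+1` times as many values as `f`. -/
lemma transfer {ι β : Type*} [DecidableEq β] (S : Finset ι) (f : ι → β) (g : ι → ℤ) (c : ℕ)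
    (h : ∀ i ∈ S, ∀ j ∈ S, f i = f j → |g i - g j| ≤ c) :
    (S.image g).card ≤ (S.image f).card * (2 * c + 1) := by
  have key : S.image g ⊆ (S.image f).biUnion
      (fun v => if hv : ∃ i ∈ S, f i = v then
        Finset.Icc (g hv.choose - c) (g hv.choose + c) else ∅) := by
    intro z hz
    obtain ⟨i, hi, rfl⟩ := Finset.mem_image.1 hz
    refine Finset.mem_biUnion.2 ⟨f i, Finset.mem_image_of_mem _ hi, ?_⟩
    have hv : ∃ j ∈ S, f j = f i := ⟨i, hi, rfl⟩
    rw [dif_pos hv]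
    have h1 := h i hi _ hv.choose_spec.1 hv.choose_spec.2.symm
    rw [abs_le] at h1
    rw [Finset.mem_Icc]
    constructor <;> linarith [h1.1, h1.2]
  refine (Finset.card_le_card key).trans (Finset.card_biUnion_le_card_mul _ _ _ ?_)
  intro v _
  split_ifs with hv
  · rw [Int.card_Icc]; omega
  · simp

lemma cells {ι : Type*} (δ : ℝ) (hδ : 0 < δ) (S : Finset ι) (v : ι → ℝ) :
    (S.image (fun i => ⌊v i / δ⌋)).card ≤ coverNum δ (v '' (↑S : Set ι)) * 2 := by
  have hne : {m : ℕ | ∃ F : Finset (Set ℝ), F.card = m ∧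
    (∀ U ∈ F, EMetric.diam U ≤ ENNReal.ofReal δ) ∧ v '' (↑S : Set ι) ⊆ ⋃ U ∈ F, U}.Nonempty := by
    refine ⟨_, S.image (fun i => {v i}), rfl, ?_, ?_⟩
    · intro U hU
      obtain ⟨i, _, rfl⟩ := Finset.mem_image.1 hU
      simp [EMetric.diam]
    · rintro _ ⟨i, hi, rfl⟩
      simp only [Set.mem_iUnion]
      exact ⟨{v i}, Finset.mem_image_of_mem _ hi, rfl⟩
  obtain ⟨F, hF, hd, hc⟩ := Nat.sInf_mem hne
  change F.card = coverNum δ _ at hF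
  rw [← hF]
  have key : S.image (fun i => ⌊v i / δ⌋) ⊆
      F.biUnion (fun U => (S.filter (fun i => v i ∈ U)).image (fun i => ⌊v i / δ⌋)) := by
    intro z hz
    obtain ⟨i, hi, rfl⟩ := Finset.mem_image.1 hz
    have := hc ⟨i, hi, rfl⟩
    simp only [Set.mem_iUnion] at this
    obtain ⟨U, hU, hiU⟩ := this
    exact Finset.mem_biUnion.2 ⟨U, hU, Finset.mem_image_of_mem _ (by simp; exact ⟨hi, hiU⟩)⟩
  refine (Finset.card_le_card key).trans (Finset.card_biUnion_le_card_mul _ _ _ ?_)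
  intro U hU
  rcases (S.filter (fun i => v i ∈ U)).eq_empty_or_nonempty with h0 | h0
  · simp [h0]
  obtain ⟨i, hi, hmin⟩ := Finset.exists_min_image _ (fun i => ⌊v i / δ⌋) h0
  have : (S.filter (fun i => v i ∈ U)).image (fun i => ⌊v i / δ⌋) ⊆
      {⌊v i / δ⌋, ⌊v i / δ⌋ + 1} := by
    intro z hz
    obtain ⟨j, hj, rfl⟩ := Finset.mem_image.1 hz
    have h1 := hmin j hj
    have hi' := (Finset.mem_filter.1 hi).2
    have hj' := (Finset.mem_filter.1 hj).2
    have h2 : edist (v j) (v i) ≤ ENNReal.ofReal δ :=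
      (Metric.edist_le_ediam_of_mem hj' hi').trans (hd U hU)
    rw [edist_dist, ENNReal.ofReal_le_ofReal_iff hδ.le, Real.dist_eq] at h2
    have h3 : v j / δ ≤ v i / δ + 1 := by
      rw [div_add_one hδ.ne']
      exact div_le_div_of_nonneg_right (by linarith [le_abs_self (v j - v i)]) hδ.le
    have h4 : ⌊v j / δ⌋ ≤ ⌊v i / δ⌋ + 1 := by
      have := Int.floor_le_floor h3
      rwa [Int.floor_add_one] at this
    simp only [Finset.mem_insert, Finset.mem_singleton]
    omega
  refine (Finset.card_le_card this).trans Finset.card_le_two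

/-- Graph part of Balog-Szemeredi-Gowers. -/
lemma bsg_graph {α : Type*} [DecidableEq α] (A : Finset α) (G : Finset (α × α))
    (hG : G ⊆ A ×ˢ A) (K : ℝ) (hK : 0 < K) (hA : A.Nonempty)
    (hd : (A.card : ℝ) ^ 2 ≤ K * G.card) :
    ∃ A' ⊆ A, (A.card : ℝ) ≤ 4 * K * A'.card ∧ ∀ x ∈ A', ∀ x' ∈ A',
      (A.card : ℝ) ^ 3 ≤ 1024 * K ^ 5 * (((A ×ˢ A ×ˢ A).filter
        (fun p => (x, p.1) ∈ G ∧ (p.2.1, p.1) ∈ G ∧ (p.2.1, p.2.2) ∈ G ∧ (x', p.2.2) ∈ G)).card : ℝ) := by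
  have hn : (0:ℝ) < A.card := by exact_mod_cast hA.card_pos
  set n : ℝ := (A.card : ℝ) with hndef
  let N : α → Finset α := fun y => A.filter (fun x => (x, y) ∈ G)
  let cd : α → α → Finset α := fun x x' => A.filter (fun y => (x, y) ∈ G ∧ (x', y) ∈ G)
  let bad : α → α → Prop := fun x x' => 16 * K ^ 2 * ((cd x x').card : ℝ) < n
  let by' : α → Finset (α × α) := fun y => ((N y) ×ˢ (N y)).filter (fun p => bad p.1 p.2)
  have hGsum : (G.card : ℝ) = ∑ y ∈ A, ((N y).card : ℝ) := by
    have h1 : G.card = ∑ y ∈ A, (G.filter (fun p => p.2 = y)).card :=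
      Finset.card_eq_sum_card_fiberwise (fun p hp => (Finset.mem_product.1 (hG hp)).2)
    rw [h1]; push_cast
    refine Finset.sum_congr rfl fun y hy => ?_
    congr 1
    refine Finset.card_bij (fun p _ => p.1) ?_ ?_ ?_
    · rintro ⟨a, b⟩ hp
      simp only [Finset.mem_filter] at hp
      obtain ⟨hp, rfl⟩ := hp
      simp only [N, Finset.mem_filter]
      exact ⟨(Finset.mem_product.1 (hG hp)).1, hp⟩
    · rintro ⟨a, b⟩ hp ⟨a', b'⟩ hp' h
      simp only [Finset.mem_filter] at hp hp' h
      rw [h, hp.2, hp'.2]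
    · intro x hx
      simp only [N, Finset.mem_filter] at hx
      exact ⟨(x, y), by simp [hx.2], rfl⟩
  have hCS : (G.card : ℝ) ^ 2 ≤ n * ∑ y ∈ A, ((N y).card : ℝ) ^ 2 := by
    rw [hGsum]; exact sq_sum_le_card_mul_sum_sq
  have hbad : ∑ y ∈ A, ((by' y).card : ℝ) * (16 * K ^ 2) ≤ n * n ^ 2 := by
    have h1 : ∑ y ∈ A, ((by' y).card : ℝ) =
        ∑ p ∈ (A ×ˢ A).filter (fun p => bad p.1 p.2), ((cd p.1 p.2).card : ℝ) := by
      have := Finset.sum_card_bipartiteAbove_eq_sum_card_bipartiteBelow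
        (s := A) (t := (A ×ˢ A).filter (fun p => bad p.1 p.2))
        (fun y p => (p.1, y) ∈ G ∧ (p.2, y) ∈ G)
      have h2 : ∀ y, by' y = Finset.bipartiteAbove (fun y p => (p.1, y) ∈ G ∧ (p.2, y) ∈ G)
          ((A ×ˢ A).filter (fun p => bad p.1 p.2)) y := by
        intro y; ext p
        simp only [by', N, Finset.mem_filter, Finset.mem_product, Finset.bipartiteAbove]
        tauto
      have h3 : ∀ p : α × α, cd p.1 p.2 = Finset.bipartiteBelow (fun y p => (p.1, y) ∈ G ∧ (p.2, y) ∈ G)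
          A p := fun p => rfl
      simp only [h2, h3]
      exact_mod_cast this
    rw [← Finset.sum_mul, h1, Finset.sum_mul]
    calc _ ≤ ∑ p ∈ (A ×ˢ A).filter (fun p => bad p.1 p.2), n := by
          refine Finset.sum_le_sum fun p hp => ?_
          have := (Finset.mem_filter.1 hp).2
          simp only [bad] at this; linarith
      _ = ((A ×ˢ A).filter (fun p => bad p.1 p.2)).card * n := by simp
      _ ≤ (n ^ 2) * n := by
          refine mul_le_mul_of_nonneg_right ?_ hn.le
          have := Finset.card_filter_le (A ×ˢ A) (fun p => bad p.1 p.2)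
          rw [Finset.card_product] at this
          have h9 := (Nat.cast_le (α := ℝ)).2 this
          rw [Nat.cast_mul] at h9
          exact h9.trans (le_of_eq (sq n).symm)
      _ = _ := by ring
  -- choose y
  have hex : ∃ y ∈ A, n ^ 2 ≤ 2 * K ^ 2 * (((N y).card : ℝ) ^ 2 - 8 * ((by' y).card : ℝ)) := by
    apply Finset.exists_le_of_sum_le hA
    rw [← Finset.mul_sum, Finset.sum_sub_distrib, ← Finset.mul_sum]
    rw [← Finset.sum_mul] at hbad
    simp only [Finset.sum_const, nsmul_eq_mul]
    rw [← hndef]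
    have h5 : n ^ 4 ≤ K ^ 2 * (n * ∑ y ∈ A, ((N y).card : ℝ) ^ 2) := by
      calc n ^ 4 = (n ^ 2) ^ 2 := by ring
        _ ≤ (K * G.card) ^ 2 := pow_le_pow_left₀ (by positivity) hd 2
        _ = K ^ 2 * (G.card : ℝ) ^ 2 := by ring
        _ ≤ _ := by gcongr
    have h6 : n ^ 3 ≤ K ^ 2 * ∑ y ∈ A, ((N y).card : ℝ) ^ 2 := by
      refine le_of_mul_le_mul_left ?_ hn
      calc n * n ^ 3 = n ^ 4 := by ring
        _ ≤ _ := h5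
        _ = _ := by ring
    nlinarith
  obtain ⟨y, hy, hyy⟩ := hex
  set m : ℝ := ((N y).card : ℝ) with hm
  have hm0 : 0 ≤ m := by positivity
  have hbn : (0:ℝ) ≤ ((by' y).card : ℝ) := by positivity
  have hmn : n ≤ 2 * K * m := by
    have : n ^ 2 ≤ (2 * K * m) ^ 2 := by nlinarith [mul_nonneg (sq_nonneg K) hbn, mul_nonneg (sq_nonneg K) (sq_nonneg m)]
    exact le_of_sq_le_sq this (by positivity)
  have hb8 : 8 * ((by' y).card : ℝ) ≤ m ^ 2 := by
    by_contra hcon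
    push Not at hcon
    have : 2 * K ^ 2 * (m ^ 2 - 8 * ((by' y).card : ℝ)) < 0 :=
      mul_neg_of_pos_of_neg (by positivity) (by linarith)
    nlinarith [sq_nonneg n]
  have hm1 : 0 < m := by
    by_contra hcon
    have : m = 0 := le_antisymm (not_lt.1 hcon) hm0
    rw [this] at hmn; linarith
  let bp : α → Finset α := fun x => (N y).filter (fun x' => bad x x')
  let A' := (N y).filter (fun x => 4 * ((bp x).card : ℝ) ≤ m)
  have hsumbp : ∑ x ∈ N y, ((bp x).card : ℝ) = ((by' y).card : ℝ) := by
    have h1 : (by' y).card = ∑ x ∈ N y, ((by' y).filter (fun p => p.1 = x)).card :=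
      Finset.card_eq_sum_card_fiberwise (fun p hp => by
        have := (Finset.mem_filter.1 hp).1
        exact (Finset.mem_product.1 this).1)
    rw [h1]; push_cast
    refine Finset.sum_congr rfl fun x hx => ?_
    congr 1
    refine Finset.card_bij (fun x' _ => (x, x')) ?_ ?_ ?_
    · intro x' hx'
      have := Finset.mem_filter.1 hx'
      simp only [by', Finset.mem_filter, Finset.mem_product]
      exact ⟨⟨⟨hx, this.1⟩, this.2⟩, trivial⟩
    · intro a _ b _ h; exact (Prod.mk.inj h).2
    · rintro ⟨a, b⟩ hp
      simp only [by', Finset.mem_filter, Finset.mem_product] at hp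
      obtain ⟨⟨⟨h1, h2⟩, h3⟩, rfl⟩ := hp
      exact ⟨b, by simp only [bp, Finset.mem_filter]; exact ⟨h2, h3⟩, rfl⟩
  have hA'c : m ≤ 2 * (A'.card : ℝ) := by
    have h1 : ((N y).filter (fun x => ¬ 4 * ((bp x).card : ℝ) ≤ m)).card * m ≤ 4 * ((by' y).card : ℝ) := by
      rw [← hsumbp, Finset.mul_sum]
      calc _ = ∑ x ∈ (N y).filter (fun x => ¬ 4 * ((bp x).card : ℝ) ≤ m), m := by simp
        _ ≤ ∑ x ∈ (N y).filter (fun x => ¬ 4 * ((bp x).card : ℝ) ≤ m), 4 * ((bp x).card : ℝ) := by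
            refine Finset.sum_le_sum fun x hx => ?_
            have := (Finset.mem_filter.1 hx).2
            push Not at this; exact this.le
        _ ≤ _ := Finset.sum_le_sum_of_subset_of_nonneg (Finset.filter_subset _ _)
            (fun _ _ _ => by positivity)
    have h2 := Finset.card_filter_add_card_filter_not (s := N y) (fun x => 4 * ((bp x).card : ℝ) ≤ m)
    have h3 : (A'.card : ℝ) + (((N y).filter (fun x => ¬ 4 * ((bp x).card : ℝ) ≤ m)).card : ℝ) = m := by
      have h9 := congrArg (Nat.cast (R := ℝ)) h2
      rw [Nat.cast_add] at h9
      exact h9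
    have h4 : (((N y).filter (fun x => ¬ 4 * ((bp x).card : ℝ) ≤ m)).card : ℝ) * 2 ≤ m := by
      refine le_of_mul_le_mul_right ?_ hm1
      nlinarith
    linarith
  refine ⟨A', (Finset.filter_subset _ _).trans (Finset.filter_subset _ _), ?_, ?_⟩
  · nlinarith
  intro x hx x' hx'
  have hx2 := (Finset.mem_filter.1 hx).2
  have hx'2 := (Finset.mem_filter.1 hx').2
  let Mid := (N y).filter (fun z => ¬ bad x z ∧ ¬ bad x' z)
  have hMid : m ≤ 2 * (Mid.card : ℝ) := by
    have h1 : N y ⊆ Mid ∪ (bp x ∪ bp x') := by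
      intro z hz
      simp only [Mid, bp, Finset.mem_union, Finset.mem_filter]
      tauto
    have h2 := (Finset.card_le_card h1).trans ((Finset.card_union_le _ _).trans
      (Nat.add_le_add_left (Finset.card_union_le _ _) _))
    have h3 : m ≤ (Mid.card : ℝ) + ((bp x).card + (bp x').card) := by
      rw [hm]; exact_mod_cast h2
    linarith
  have hsub : Mid.biUnion (fun z => ((cd x z) ×ˢ (cd x' z)).image (fun q => (q.1, z, q.2))) ⊆
     ((A ×ˢ A ×ˢ A).filter
        (fun p => (x, p.1) ∈ G ∧ (p.2.1, p.1) ∈ G ∧ (p.2.1, p.2.2) ∈ G ∧ (x', p.2.2) ∈ G)) := by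
    intro p hp
    simp only [Mid, N, cd, Finset.mem_biUnion, Finset.mem_image, Finset.mem_product,
      Finset.mem_filter] at hp
    obtain ⟨z, hz, q, hq, rfl⟩ := hp
    simp only [Finset.mem_filter, Finset.mem_product]
    tauto
  have hcard : (Mid.card : ℝ) * n ^ 2 ≤ 256 * K ^ 4 * ((Mid.biUnion (fun z => ((cd x z) ×ˢ (cd x' z)).image (fun q => (q.1, z, q.2)))).card : ℝ) := by
    rw [Finset.card_biUnion]
    · push_cast
      rw [Finset.mul_sum]
      calc (Mid.card : ℝ) * n ^ 2 = ∑ z ∈ Mid, n ^ 2 := by simp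
        _ ≤ _ := by
          refine Finset.sum_le_sum fun z hz => ?_
          rw [Finset.card_image_of_injective _ (by
            rintro ⟨a, b⟩ ⟨c, d⟩ h; simp at h; simp [h]), Finset.card_product]
          have h := (Finset.mem_filter.1 hz).2
          simp only [bad, not_lt] at h
          push_cast
          calc n ^ 2 = n * n := sq n
            _ ≤ (16 * K ^ 2 * ((cd x z).card : ℝ)) * (16 * K ^ 2 * ((cd x' z).card : ℝ)) :=
              mul_le_mul h.1 h.2 hn.le (by positivity)
            _ = _ := by ring
    · intro z _ z' _ hne
      refine Finset.disjoint_left.2 ?_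
      intro p hp hp'
      simp only [Finset.mem_image] at hp hp'
      obtain ⟨q, _, rfl⟩ := hp
      obtain ⟨q', _, h⟩ := hp'
      simp at h
      exact hne h.2.1.symm
  have hle : ((Mid.biUnion (fun z => ((cd x z) ×ˢ (cd x' z)).image (fun q => (q.1, z, q.2)))).card : ℝ) ≤ _ :=
    Nat.cast_le.2 (Finset.card_le_card hsub)
  have hnM : n ≤ 4 * K * (Mid.card : ℝ) := by nlinarith
  calc n ^ 3 = n * n ^ 2 := by ring
    _ ≤ (4 * K * (Mid.card : ℝ)) * n ^ 2 := by gcongr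
    _ = 4 * K * ((Mid.card : ℝ) * n ^ 2) := by ring
    _ ≤ 4 * K * (256 * K ^ 4 * _) := mul_le_mul_of_nonneg_left
        (hcard.trans (mul_le_mul_of_nonneg_left hle (by positivity))) (by positivity)
    _ = _ := by ring

lemma bsg_diff {α : Type*} [DecidableEq α] (A A' : Finset α) (G : Finset (α × α))
    (P Q : α → ℤ) (φ : ℕ)
    (hP : ∀ v, (A.filter (fun x => P x = v)).card ≤ φ)
    (hQ : ∀ v, (A.filter (fun x => Q x = v)).card ≤ φ) (pm : ℝ)
    (hp : ∀ x ∈ A', ∀ x' ∈ A', pm ≤ (((A ×ˢ A ×ˢ A).filter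
        (fun p => (x, p.1) ∈ G ∧ (p.2.1, p.1) ∈ G ∧ (p.2.1, p.2.2) ∈ G ∧
          (x', p.2.2) ∈ G)).card : ℝ)) :
    (((A' ×ˢ A').image (fun p => P p.1 - P p.2)).card : ℝ) * pm ≤
      (φ : ℝ) ^ 3 * ((G.image (fun p => P p.1 + Q p.2)).card : ℝ) ^ 4 := by
  set D := (A' ×ˢ A').image (fun p => P p.1 - P p.2) with hD
  set S := G.image (fun p => P p.1 + Q p.2) with hS
  rcases A'.eq_empty_or_nonempty with h0 | ⟨a0, ha0⟩
  · have : D = ∅ := by rw [hD, h0]; simp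
    rw [this]; simp; positivity
  have hrep : ∀ d, ∃ p : α × α, d ∈ D → p.1 ∈ A' ∧ p.2 ∈ A' ∧ P p.1 - P p.2 = d := by
    intro d
    by_cases hd : d ∈ D
    · obtain ⟨p, hp1, hp2⟩ := Finset.mem_image.1 hd
      exact ⟨p, fun _ => ⟨(Finset.mem_product.1 hp1).1, (Finset.mem_product.1 hp1).2, hp2⟩⟩
    · exact ⟨(a0, a0), fun h => absurd h hd⟩
  choose rep hrep using hrep
  let paths : ℤ → Finset (α × α × α) := fun d => (A ×ˢ A ×ˢ A).filter
        (fun p => ((rep d).1, p.1) ∈ G ∧ (p.2.1, p.1) ∈ G ∧ (p.2.1, p.2.2) ∈ G ∧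
          ((rep d).2, p.2.2) ∈ G)
  let Ω : Finset ((_ : ℤ) × (α × α × α)) := D.sigma paths
  have hΩ : (D.card : ℝ) * pm ≤ (Ω.card : ℝ) := by
    rw [Finset.card_sigma]; push_cast
    calc (D.card : ℝ) * pm = ∑ d ∈ D, pm := by simp
      _ ≤ _ := Finset.sum_le_sum fun d hd => hp _ (hrep d hd).1 _ (hrep d hd).2.1
  let F : ((_ : ℤ) × (α × α × α)) → ℤ × ℤ × ℤ × ℤ := fun ω =>
    (P (rep ω.1).1 + Q ω.2.1, P ω.2.2.1 + Q ω.2.1, P ω.2.2.1 + Q ω.2.2.2,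
      P (rep ω.1).2 + Q ω.2.2.2)
  have hfin : Ω.card ≤ φ ^ 3 * (S ×ˢ S ×ˢ S ×ˢ S).card := by
    refine Finset.card_le_mul_card_image_of_maps_to (f := F) ?_ _ ?_
    · rintro ⟨d, y1, x1, y2⟩ hω
      obtain ⟨hd, hpa⟩ := Finset.mem_sigma.1 hω
      simp only [paths, Finset.mem_filter] at hpa
      obtain ⟨_, h1, h2, h3, h4⟩ := hpa
      simp only [F, Finset.mem_product]
      exact ⟨Finset.mem_image.2 ⟨_, h1, rfl⟩, Finset.mem_image.2 ⟨_, h2, rfl⟩,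
        Finset.mem_image.2 ⟨_, h3, rfl⟩, Finset.mem_image.2 ⟨_, h4, rfl⟩⟩
    · rintro ⟨b1, b2, b3, b4⟩ _
      set d0 := b1 - b2 + b3 - b4 with hd0
      set c := P (rep d0).1 with hc
      have hd : ∀ ω ∈ Ω.filter (fun ω => F ω = (b1, b2, b3, b4)), ω.1 = d0 ∧
          ω.2 ∈ (A.filter (fun x => Q x = b1 - c)) ×ˢ (A.filter (fun x => P x = b2 - b1 + c)) ×ˢ
            (A.filter (fun x => Q x = b3 - b2 + b1 - c)) := by
        rintro ⟨d, y1, x1, y2⟩ hω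
        obtain ⟨hω1, hω2⟩ := Finset.mem_filter.1 hω
        obtain ⟨hd, hpa⟩ := Finset.mem_sigma.1 hω1
        simp only [paths, Finset.mem_filter, Finset.mem_product] at hpa
        simp only [F, Prod.mk.injEq] at hω2
        obtain ⟨e1, e2, e3, e4⟩ := hω2
        have e5 := (hrep d hd).2.2
        have e6 : d = d0 := by rw [hd0]; linarith
        subst e6
        refine ⟨rfl, ?_⟩
        simp only [Finset.mem_product, Finset.mem_filter]
        refine ⟨⟨hpa.1.1, ?_⟩, ⟨hpa.1.2.1, ?_⟩, ⟨hpa.1.2.2, ?_⟩⟩ <;> rw [hc] <;> linarith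
      have hle : (Ω.filter (fun ω => F ω = (b1, b2, b3, b4))).card ≤
          ((A.filter (fun x => Q x = b1 - c)) ×ˢ (A.filter (fun x => P x = b2 - b1 + c)) ×ˢ
            (A.filter (fun x => Q x = b3 - b2 + b1 - c))).card := by
        refine Finset.card_le_card_of_injOn (fun ω => ω.2) (fun ω hω => (hd ω hω).2) ?_
        rintro ⟨d, p⟩ hω ⟨d', p'⟩ hω' h
        have h1 := (hd _ hω).1
        have h2 := (hd _ hω').1
        simp only at h h1 h2
        subst h; rw [h1, h2]
      refine hle.trans ?_
      rw [Finset.card_product, Finset.card_product]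
      calc _ ≤ φ * (φ * φ) := Nat.mul_le_mul (hQ _) (Nat.mul_le_mul (hP _) (hQ _))
        _ = φ ^ 3 := by ring
  refine hΩ.trans ?_
  have := (Nat.cast_le (α := ℝ)).2 hfin
  refine this.trans (le_of_eq ?_)
  simp only [Finset.card_product]
  push_cast; ring

section Helpers

open scoped Pointwise

lemma int_abs_le (z : ℤ) (c : ℕ) (h : |(z : ℝ)| < c + 1) : |z| ≤ c := by
  have : ((|z| : ℤ) : ℝ) < ((c + 1 : ℤ) : ℝ) := by push_cast; exact h
  have h2 := Int.cast_lt.1 this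
  omega

lemma floor_inj (δ : ℝ) (hδ : 0 < δ) (A : Finset ℝ)
    (hsep : ∀ x ∈ A, ∀ y ∈ A, x ≠ y → δ ≤ |x - y|) (x y : ℝ) (hx : x ∈ A) (hy : y ∈ A)
    (h : ⌊x / δ⌋ = ⌊y / δ⌋) : x = y := by
  by_contra hne
  have h1 := hsep x hx y hy hne
  have h2 := Int.abs_sub_lt_one_of_floor_eq_floor h
  rw [← sub_div, abs_div, abs_of_pos hδ, div_lt_one hδ] at h2
  linarith

/-- number of separated points controlled by the image of a map with bounded fibres -/
lemma card_le_of_fibre {β : Type*} [DecidableEq β] (δ : ℝ) (hδ : 0 < δ) (A : Finset ℝ)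
    (hsep : ∀ x ∈ A, ∀ y ∈ A, x ≠ y → δ ≤ |x - y|) (f : ℝ → β) (r : ℝ) (hr : 1 ≤ r)
    (h : ∀ x ∈ A, ∀ y ∈ A, f x = f y → |x - y| ≤ r * δ) :
    (A.card : ℝ) ≤ 7 * r * (A.image f).card := by
  have h1 := transfer A f (fun x => ⌊x / δ⌋) (⌈r⌉₊ + 1) (by
    intro x hx y hy hf
    have h2 := h x hx y hy hf
    refine int_abs_le _ _ ?_
    have h3 : |x / δ - y / δ| ≤ r := by
      rw [← sub_div, abs_div, abs_of_pos hδ, div_le_iff₀ hδ]; exact h2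
    have h4 := Nat.le_ceil r
    push_cast
    rw [abs_lt]; rw [abs_le] at h3
    constructor <;> linarith [Int.floor_le (x / δ), Int.lt_floor_add_one (x / δ),
      Int.floor_le (y / δ), Int.lt_floor_add_one (y / δ), h3.1, h3.2])
  rw [Finset.card_image_of_injOn (fun x hx y hy hxy => floor_inj δ hδ A hsep x y hx hy hxy)] at h1
  have h2 : (A.card : ℝ) ≤ ((A.image f).card : ℝ) * (2 * (⌈r⌉₊ + 1) + 1) := by exact_mod_cast h1
  have h4 := (Nat.ceil_lt_add_one (by linarith : (0:ℝ) ≤ r)).le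
  refine h2.trans ?_
  rw [mul_comm]
  gcongr
  linarith

lemma fibre_le (δ : ℝ) (hδ : 0 < δ) (A : Finset ℝ)
    (hsep : ∀ x ∈ A, ∀ y ∈ A, x ≠ y → δ ≤ |x - y|) (f : ℝ → ℤ) (r : ℝ) (hr : 1 ≤ r)
    (h : ∀ x ∈ A, ∀ y ∈ A, f x = f y → |x - y| ≤ r * δ) (v : ℤ) :
    ((A.filter (fun x => f x = v)).card : ℝ) ≤ 7 * r := by
  have h1 := card_le_of_fibre δ hδ (A.filter (fun x => f x = v))
    (fun x hx y hy => hsep x (Finset.mem_filter.1 hx).1 y (Finset.mem_filter.1 hy).1) f r hr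
    (fun x hx y hy => h x (Finset.mem_filter.1 hx).1 y (Finset.mem_filter.1 hy).1)
  have h2 : ((A.filter (fun x => f x = v)).image f).card ≤ 1 := by
    refine Finset.card_le_one.2 ?_
    intro a ha b hb
    obtain ⟨x, hx, rfl⟩ := Finset.mem_image.1 ha
    obtain ⟨y, hy, rfl⟩ := Finset.mem_image.1 hb
    rw [(Finset.mem_filter.1 hx).2, (Finset.mem_filter.1 hy).2]
  have h3 : (((A.filter (fun x => f x = v)).image f).card : ℝ) ≤ 1 := by exact_mod_cast h2
  nlinarith

lemma sub_eq_image {α β : Type*} (A : Finset α) (B : Finset β) (f : α → ℤ) (g : β → ℤ) :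
    A.image f - B.image g = (A ×ˢ B).image (fun p => f p.1 - g p.2) := by
  ext z
  simp only [Finset.mem_sub, Finset.mem_image, Finset.mem_product, Prod.exists]
  constructor
  · rintro ⟨_, ⟨a, ha, rfl⟩, _, ⟨b, hb, rfl⟩, rfl⟩
    exact ⟨a, b, ⟨ha, hb⟩, rfl⟩
  · rintro ⟨a, b, ⟨ha, hb⟩, rfl⟩
    exact ⟨_, ⟨a, ha, rfl⟩, _, ⟨b, hb, rfl⟩, rfl⟩

lemma add_eq_image {α β : Type*} (A : Finset α) (B : Finset β) (f : α → ℤ) (g : β → ℤ) :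
    A.image f + B.image g = (A ×ˢ B).image (fun p => f p.1 + g p.2) := by
  ext z
  simp only [Finset.mem_add, Finset.mem_image, Finset.mem_product, Prod.exists]
  constructor
  · rintro ⟨_, ⟨a, ha, rfl⟩, _, ⟨b, hb, rfl⟩, rfl⟩
    exact ⟨a, b, ⟨ha, hb⟩, rfl⟩
  · rintro ⟨a, b, ⟨ha, hb⟩, rfl⟩
    exact ⟨_, ⟨a, ha, rfl⟩, _, ⟨b, hb, rfl⟩, rfl⟩

/-- Plünnecke in real form. -/
lemma plun (M : Finset ℤ) (hM : M.Nonempty) (κ n : ℝ) (h : ((M - M).card : ℝ) ≤ κ * M.card)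
    (hn : (M.card : ℝ) ≤ n) (k l : ℕ) :
    ((k • M - l • M).card : ℝ) ≤ κ ^ (k + l) * n := by
  have h1 := Finset.pluennecke_ruzsa_inequality_nsmul_sub_nsmul_sub hM M k l
  have h2 : ((k • M - l • M).card : ℝ) ≤ (((M - M).card : ℝ) / M.card) ^ (k + l) * M.card := by
    have h9 := (NNRat.cast_le (K := ℝ)).2 h1
    push_cast at h9
    exact h9
  have hpos : (0:ℝ) < M.card := by exact_mod_cast hM.card_pos
  refine h2.trans ?_
  have h3 : ((M - M).card : ℝ) / M.card ≤ κ := by rwa [div_le_iff₀ hpos]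
  have h4 : 0 ≤ ((M - M).card : ℝ) / M.card := by positivity
  have h5 : 0 ≤ κ := h4.trans h3
  gcongr

lemma msize (δ L : ℝ) (hδ : 0 < δ) (hL : 1 ≤ L) (A : Finset ℝ)
    (hA : ∀ x ∈ A, 1 / L ≤ x ∧ x ≤ 1)
    (hsep : ∀ x ∈ A, ∀ y ∈ A, x ≠ y → δ ≤ |x - y|) :
    (A.card : ℝ) ≤ 7 * L * (A.image (fun x => ⌊x ^ 2 / δ⌋)).card := by
  refine card_le_of_fibre δ hδ A hsep _ L hL ?_
  intro x hx y hy h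
  have h2 := Int.abs_sub_lt_one_of_floor_eq_floor h
  rw [← sub_div, abs_div, abs_of_pos hδ, div_lt_one hδ] at h2
  have h3 : x ^ 2 - y ^ 2 = (x - y) * (x + y) := by ring
  have hl : 0 < 1 / L := by positivity
  rw [h3, abs_mul, abs_of_pos (by linarith [(hA x hx).1, (hA y hy).1] : 0 < x + y)] at h2
  have h4 : |x - y| * (1 / L) ≤ δ := by
    have : |x - y| * (1 / L) ≤ |x - y| * (x + y) :=
      mul_le_mul_of_nonneg_left (by linarith [(hA x hx).1, (hA y hy).1]) (abs_nonneg _)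
    linarith
  rw [mul_one_div, div_le_iff₀ (by linarith)] at h4
  linarith

lemma step3a (δ L n r0 : ℝ) (hL : 1 ≤ L) (A : Finset ℝ) (hne : A.Nonempty)
    (hn : 0 < n) (hAn : n ≤ L * A.card)
    (hclose : ∀ y, ((A.filter (fun x => |x - y| < r0)).card : ℝ) * 4 ≤ A.card)
    (hN : (((A ×ˢ A).image (fun p => ⌊p.1 / δ⌋ - ⌊p.2 / δ⌋)).card : ℝ) ≤ L * n) :
    ∃ A1 ⊆ A, (A.card : ℝ) ≤ 2 * A1.card ∧ ∃ y0 ∈ A, ∀ x ∈ A1, r0 ≤ |x - y0| ∧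
      n ≤ 4 * L ^ 3 * ((A ×ˢ A).filter (fun p => ⌊p.1 / δ⌋ - ⌊p.2 / δ⌋ = ⌊x / δ⌋ - ⌊y0 / δ⌋)).card := by
  have hc : (0:ℝ) < A.card := by exact_mod_cast hne.card_pos
  let d : ℝ × ℝ → ℤ := fun p => ⌊p.1 / δ⌋ - ⌊p.2 / δ⌋
  let r : ℤ → ℝ := fun z => (((A ×ˢ A).filter (fun p => d p = z)).card : ℝ)
  let unpop := (A ×ˢ A).filter (fun p => 4 * L ^ 3 * r (d p) < n)
  let close := (A ×ˢ A).filter (fun p => |p.1 - p.2| < r0)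
  have h1 : (unpop.card : ℝ) * 4 ≤ (A.card : ℝ) ^ 2 := by
    have h2 : unpop.card = ∑ z ∈ (A ×ˢ A).image d, (unpop.filter (fun p => d p = z)).card :=
      Finset.card_eq_sum_card_fiberwise (fun p hp =>
        Finset.mem_image_of_mem _ (Finset.mem_filter.1 hp).1)
    have h3 : ∀ z ∈ (A ×ˢ A).image d, 4 * L ^ 3 * ((unpop.filter (fun p => d p = z)).card : ℝ) ≤ n := by
      intro z _
      rcases (unpop.filter (fun p => d p = z)).eq_empty_or_nonempty with h0 | ⟨p, hp⟩
      · rw [h0]; simp; exact hn.le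
      · obtain ⟨hp1, hp2⟩ := Finset.mem_filter.1 hp
        have hp3 := (Finset.mem_filter.1 hp1).2
        rw [hp2] at hp3
        refine le_trans ?_ hp3.le
        have : ((unpop.filter (fun p => d p = z)).card : ℝ) ≤ r z :=
          Nat.cast_le.2 (Finset.card_le_card (Finset.filter_subset_filter _ (Finset.filter_subset _ _)))
        gcongr
    have h4 : 4 * L ^ 3 * (unpop.card : ℝ) ≤ (L * n) * n := by
      rw [h2]; push_cast; rw [Finset.mul_sum]
      refine (Finset.sum_le_sum h3).trans ?_
      simp only [Finset.sum_const, nsmul_eq_mul]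
      exact mul_le_mul_of_nonneg_right hN hn.le
    have h5 : L * n * n ≤ L ^ 3 * (A.card : ℝ) ^ 2 := by
      calc L * n * n = L * (n * n) := by ring
        _ ≤ L * ((L * A.card) * (L * A.card)) := by gcongr
        _ = _ := by ring
    have h6 : L ^ 3 * ((unpop.card : ℝ) * 4) ≤ L ^ 3 * (A.card : ℝ) ^ 2 := by linarith
    exact le_of_mul_le_mul_left h6 (by positivity)
  have h2 : (close.card : ℝ) * 4 ≤ (A.card : ℝ) ^ 2 := by
    have h3 : close.card = ∑ y ∈ A, (close.filter (fun p => p.2 = y)).card :=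
      Finset.card_eq_sum_card_fiberwise (fun p hp =>
        (Finset.mem_product.1 (Finset.mem_filter.1 hp).1).2)
    rw [h3]; push_cast; rw [Finset.sum_mul]
    calc _ ≤ ∑ y ∈ A, (A.card : ℝ) := by
          refine Finset.sum_le_sum fun y _ => le_trans ?_ (hclose y)
          have : (close.filter (fun p => p.2 = y)).card ≤ (A.filter (fun x => |x - y| < r0)).card := by
            refine Finset.card_le_card_of_injOn (fun p => p.1) ?_ ?_
            · rintro ⟨a, b⟩ hp
              simp only [close, Finset.coe_filter, Finset.mem_filter, Finset.mem_product, Set.mem_ofPred_eq] at hp ⊢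
              obtain ⟨⟨⟨h1, h2⟩, h3⟩, rfl⟩ := hp
              exact ⟨h1, h3⟩
            · rintro ⟨a, b⟩ hp ⟨a', b'⟩ hp' h
              simp only [Finset.coe_filter, Set.mem_ofPred_eq] at hp hp' h
              rw [h, hp.2, hp'.2]
          have : ((close.filter (fun p => p.2 = y)).card : ℝ) ≤ ((A.filter (fun x => |x - y| < r0)).card : ℝ) := by
            exact_mod_cast this
          linarith
      _ = _ := by simp [sq]
  let good := (A ×ˢ A).filter (fun p => r0 ≤ |p.1 - p.2| ∧ n ≤ 4 * L ^ 3 * r (d p))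
  have h3 : (A.card : ℝ) ^ 2 ≤ 2 * good.card := by
    have h4 : A ×ˢ A ⊆ good ∪ (unpop ∪ close) := by
      intro p hp
      simp only [good, unpop, close, Finset.mem_union, Finset.mem_filter]
      by_cases h5 : r0 ≤ |p.1 - p.2|
      · by_cases h6 : n ≤ 4 * L ^ 3 * r (d p)
        · exact Or.inl ⟨hp, h5, h6⟩
        · exact Or.inr (Or.inl ⟨hp, not_le.1 h6⟩)
      · exact Or.inr (Or.inr ⟨hp, not_le.1 h5⟩)
    have h5 := (Finset.card_le_card h4).trans ((Finset.card_union_le _ _).trans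
      (Nat.add_le_add_left (Finset.card_union_le _ _) _))
    rw [Finset.card_product] at h5
    have h6 : (A.card : ℝ) * A.card ≤ good.card + (unpop.card + close.card) := by exact_mod_cast h5
    nlinarith
  have h4 : ∃ y0 ∈ A, (A.card : ℝ) ≤ 2 * ((good.filter (fun p => p.2 = y0)).card : ℝ) := by
    apply Finset.exists_le_of_sum_le hne
    have h5 : good.card = ∑ y ∈ A, (good.filter (fun p => p.2 = y)).card :=
      Finset.card_eq_sum_card_fiberwise (fun p hp =>
        (Finset.mem_product.1 (Finset.mem_filter.1 hp).1).2)
    have h6 : (good.card : ℝ) = ∑ y ∈ A, ((good.filter (fun p => p.2 = y)).card : ℝ) := by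
      exact_mod_cast h5
    rw [← Finset.mul_sum, ← h6]
    simp only [Finset.sum_const, nsmul_eq_mul]
    linarith [sq (A.card : ℝ)]
  obtain ⟨y0, hy0, h5⟩ := h4
  refine ⟨(good.filter (fun p => p.2 = y0)).image Prod.fst, ?_, ?_, y0, hy0, ?_⟩
  · intro x hx
    obtain ⟨p, hp, rfl⟩ := Finset.mem_image.1 hx
    exact (Finset.mem_product.1 (Finset.mem_filter.1 (Finset.mem_filter.1 hp).1).1).1
  · rw [Finset.card_image_of_injOn]
    · exact h5
    · rintro ⟨a, b⟩ hp ⟨a', b'⟩ hp' h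
      simp only [Finset.coe_filter, Set.mem_ofPred_eq] at hp hp' h
      rw [h, hp.2, hp'.2]
  · intro x hx
    obtain ⟨⟨a, b⟩, hp, rfl⟩ := Finset.mem_image.1 hx
    obtain ⟨hp1, hp2⟩ := Finset.mem_filter.1 hp
    simp only at hp2
    subst hp2
    exact (Finset.mem_filter.1 hp1).2

lemma sq_approx (δ t u v e : ℝ) (hδ : 0 < δ) (hδ1 : δ ≤ 1) (hv0 : 0 ≤ v) (hv1 : v ≤ 1)
    (he : |e| ≤ 2 * δ) (huv : u - v = t + e) :
    |u ^ 2 / δ - v ^ 2 / δ - (2 * t * u / δ - t ^ 2 / δ)| ≤ 8 := by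
  have h1 : u ^ 2 / δ - v ^ 2 / δ - (2 * t * u / δ - t ^ 2 / δ) = (e * (2 * v + e)) / δ := by
    have : u = v + t + e := by linarith
    subst this
    field_simp
    ring
  rw [h1, abs_div, abs_of_pos hδ, div_le_iff₀ hδ, abs_mul]
  have h2 : |2 * v + e| ≤ 4 := by
    rw [abs_le] at he ⊢
    constructor <;> linarith [he.1, he.2]
  calc |e| * |2 * v + e| ≤ (2 * δ) * 4 := mul_le_mul he h2 (abs_nonneg _) (by linarith)
    _ = 8 * δ := by ring

lemma arith3b (c y a b L n r0 u : ℝ) (hL : 1000 ≤ L) (hn : 0 < n) (hr0 : 0 < r0) (hc : 0 ≤ c)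
    (ha0 : 0 ≤ a) (hb0 : 0 ≤ b)
    (h : c * y ≤ a * b) (ha : a ≤ 11 * (L * n)) (hb : b ≤ 45 * ((7 * L ^ 3) ^ 3 * n))
    (hu : n ≤ 4 * L ^ 3 * u) (huy : u ≤ 7 * (1 / r0) * y) : c ≤ L ^ 16 / r0 * n := by
  have hL0 : 0 < L := by linarith
  have h1 : u * r0 ≤ 7 * y := by
    calc u * r0 ≤ (7 * (1 / r0) * y) * r0 := mul_le_mul_of_nonneg_right huy hr0.le
      _ = 7 * y := by field_simp
  have h2 : n * r0 ≤ 28 * L ^ 3 * y := by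
    calc n * r0 ≤ (4 * L ^ 3 * u) * r0 := mul_le_mul_of_nonneg_right hu hr0.le
      _ = 4 * L ^ 3 * (u * r0) := by ring
      _ ≤ 4 * L ^ 3 * (7 * y) := mul_le_mul_of_nonneg_left h1 (by positivity)
      _ = _ := by ring
  have h3 : c * (n * r0) ≤ L ^ 16 * n * n := by
    calc c * (n * r0) ≤ c * (28 * L ^ 3 * y) := mul_le_mul_of_nonneg_left h2 hc
      _ = 28 * L ^ 3 * (c * y) := by ring
      _ ≤ 28 * L ^ 3 * ((11 * (L * n)) * (45 * ((7 * L ^ 3) ^ 3 * n))) := by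
          refine mul_le_mul_of_nonneg_left ?_ (by positivity)
          exact h.trans (mul_le_mul ha hb hb0 (by positivity))
      _ = 4753980 * (L ^ 13 * n * n) := by ring
      _ ≤ L ^ 3 * (L ^ 13 * n * n) := by
          refine mul_le_mul_of_nonneg_right ?_ (by positivity)
          calc (4753980:ℝ) ≤ 1000 ^ 3 := by norm_num
            _ ≤ L ^ 3 := by gcongr
      _ = _ := by ring
  rw [div_mul_eq_mul_div, le_div_iff₀ hr0]
  refine le_of_mul_le_mul_right ?_ hn
  calc _ = c * (n * r0) := by ring
    _ ≤ _ := h3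

lemma step3b (δ L n r0 : ℝ) (hδ : 0 < δ) (hδ1 : δ ≤ 1) (hL : 1000 ≤ L) (A : Finset ℝ)
    (hne : A.Nonempty) (hA : ∀ x ∈ A, 1 / L ≤ x ∧ x ≤ 1)
    (hsep : ∀ x ∈ A, ∀ y ∈ A, x ≠ y → δ ≤ |x - y|)
    (hn : 0 < n) (hAn : n ≤ L * A.card) (hAn' : (A.card : ℝ) ≤ n)
    (hr0 : 0 < r0) (hr1 : r0 ≤ 1)
    (hN : (((A ×ˢ A).image (fun p => ⌊p.1 / δ⌋ - ⌊p.2 / δ⌋)).card : ℝ) ≤ L * n)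
    (hM : (((A ×ˢ A).image (fun p => ⌊p.1 ^ 2 / δ⌋ - ⌊p.2 ^ 2 / δ⌋)).card : ℝ) ≤ L * n)
    (x0 y0 : ℝ) (hx0 : x0 ∈ A) (hy0 : y0 ∈ A) (hxy : r0 ≤ |x0 - y0|)
    (hpop : n ≤ 4 * L ^ 3 * ((A ×ˢ A).filter
      (fun p => ⌊p.1 / δ⌋ - ⌊p.2 / δ⌋ = ⌊x0 / δ⌋ - ⌊y0 / δ⌋)).card) :
    ((A.image (fun x => ⌊2 * (x0 - y0) * x / δ⌋) + A.image (fun x => ⌊x ^ 2 / δ⌋)).card : ℝ) ≤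
      L ^ 16 / r0 * n := by
  have hL0 : 0 < L := by linarith
  have hA0 : ∀ x ∈ A, 0 ≤ x ∧ x ≤ 1 := fun x hx =>
    ⟨(by positivity : (0:ℝ) ≤ 1 / L).trans (hA x hx).1, (hA x hx).2⟩
  set t := x0 - y0 with ht
  have ht1 : |t| ≤ 1 := by
    rw [abs_le]; constructor <;> linarith [(hA0 x0 hx0).1, (hA0 x0 hx0).2, (hA0 y0 hy0).1, (hA0 y0 hy0).2]
  set M := A.image (fun x => ⌊x ^ 2 / δ⌋) with hMdef
  have hMne : M.Nonempty := hne.image _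
  have hMn : (M.card : ℝ) ≤ n := le_trans (by exact_mod_cast Finset.card_image_le) hAn'
  have hms := msize δ L hδ (by linarith) A hA hsep
  rw [← hMdef] at hms
  have hMM : ((M - M).card : ℝ) ≤ 7 * L ^ 3 * M.card := by
    rw [hMdef, sub_eq_image, ← hMdef]
    refine hM.trans ?_
    calc L * n ≤ L * (L * (7 * L * M.card)) := by gcongr; exact hAn.trans (by gcongr)
      _ = _ := by ring
  have hpl := plun M hMne _ n hMM hMn 1 2
  set P := (A ×ˢ A).filter
      (fun p => ⌊p.1 / δ⌋ - ⌊p.2 / δ⌋ = ⌊x0 / δ⌋ - ⌊y0 / δ⌋) with hP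
  set U := P.image Prod.fst with hU
  have hPmem : ∀ p ∈ P, p.1 ∈ A ∧ p.2 ∈ A ∧ ⌊p.1 / δ⌋ - ⌊p.2 / δ⌋ = ⌊x0 / δ⌋ - ⌊y0 / δ⌋ := by
    intro p hp
    obtain ⟨h1, h2⟩ := Finset.mem_filter.1 hp
    exact ⟨(Finset.mem_product.1 h1).1, (Finset.mem_product.1 h1).2, h2⟩
  have hUP : U.card = P.card := by
    refine Finset.card_image_of_injOn ?_
    rintro ⟨a, b⟩ hp ⟨a', b'⟩ hp' h
    have h1 := hPmem _ hp
    have h2 := hPmem _ hp'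
    simp only at h h1 h2
    subst h
    have := floor_inj δ hδ A hsep b b' h1.2.1 h2.2.1 (by linarith [h1.2.2, h2.2.2])
    rw [this]
  have hUA : U ⊆ A := by
    intro u hu
    obtain ⟨p, hp, rfl⟩ := Finset.mem_image.1 hu
    exact (hPmem p hp).1
  set X := A.image (fun x => ⌊2 * t * x / δ⌋) with hX
  set Y := U.image (fun x => ⌊2 * t * x / δ⌋) with hY
  -- lower bound for Y
  have hYc : (U.card : ℝ) ≤ 7 * (1 / r0) * Y.card := by
    refine card_le_of_fibre δ hδ U (fun x hx y hy => hsep x (hUA hx) y (hUA hy)) _ (1 / r0)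
      (by rw [le_div_iff₀ hr0]; linarith) ?_
    intro x hx y hy h
    have h2 := Int.abs_sub_lt_one_of_floor_eq_floor h
    rw [← sub_div, abs_div, abs_of_pos hδ, div_lt_one hδ, ← mul_sub, abs_mul, abs_mul,
      abs_of_pos (by norm_num : (0:ℝ) < 2)] at h2
    rw [one_div_mul_eq_div, le_div_iff₀ hr0]
    nlinarith [mul_le_mul_of_nonneg_left hxy (abs_nonneg (x - y)), abs_nonneg (x - y),
      mul_nonneg (abs_nonneg t) (abs_nonneg (x - y))]
  -- X - Y
  have hXX : ((X - X).card : ℝ) ≤ 11 * (L * n) := by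
    have h1 := transfer (A ×ˢ A) (fun p => ⌊p.1 / δ⌋ - ⌊p.2 / δ⌋)
      (fun p => ⌊2 * t * p.1 / δ⌋ - ⌊2 * t * p.2 / δ⌋) 5 (by
      rintro ⟨a, b⟩ _ ⟨c, d⟩ _ h
      refine int_abs_le _ _ ?_
      simp only at h ⊢
      have h0 : ((⌊a / δ⌋ : ℝ) - ⌊b / δ⌋) = (⌊c / δ⌋ : ℝ) - ⌊d / δ⌋ := by exact_mod_cast h
      have h2 : |a / δ - b / δ - (c / δ - d / δ)| ≤ 2 := by
        rw [abs_le]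
        constructor <;> linarith [Int.floor_le (a / δ), Int.lt_floor_add_one (a / δ),
          Int.floor_le (b / δ), Int.lt_floor_add_one (b / δ), Int.floor_le (c / δ),
          Int.lt_floor_add_one (c / δ), Int.floor_le (d / δ), Int.lt_floor_add_one (d / δ)]
      have h3 : |2 * t * a / δ - 2 * t * b / δ - (2 * t * c / δ - 2 * t * d / δ)| ≤ 4 := by
        have : 2 * t * a / δ - 2 * t * b / δ - (2 * t * c / δ - 2 * t * d / δ) =
          (2 * t) * (a / δ - b / δ - (c / δ - d / δ)) := by ring
        rw [this, abs_mul, abs_mul, abs_of_pos (by norm_num : (0:ℝ) < 2)]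
        nlinarith [abs_nonneg t, abs_nonneg (a / δ - b / δ - (c / δ - d / δ))]
      rw [abs_le] at h3
      push_cast
      rw [abs_lt]
      constructor <;> linarith [Int.floor_le (2 * t * a / δ), Int.lt_floor_add_one (2 * t * a / δ),
          Int.floor_le (2 * t * b / δ), Int.lt_floor_add_one (2 * t * b / δ),
          Int.floor_le (2 * t * c / δ), Int.lt_floor_add_one (2 * t * c / δ),
          Int.floor_le (2 * t * d / δ), Int.lt_floor_add_one (2 * t * d / δ), h3.1, h3.2])
    rw [hX, sub_eq_image]
    have h2 := (Nat.cast_le (α := ℝ)).2 h1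
    push_cast at h2
    linarith
  have hXY : ((X - Y).card : ℝ) ≤ 11 * (L * n) := by
    refine le_trans ?_ hXX
    exact_mod_cast Finset.card_le_card (Finset.sub_subset_sub_left (Finset.image_subset_image hUA))
  -- Y - M
  have hrep : ∀ u, ∃ v, u ∈ U → (u, v) ∈ P := by
    intro u
    by_cases hu : u ∈ U
    · obtain ⟨p, hp, rfl⟩ := Finset.mem_image.1 hu
      exact ⟨p.2, fun _ => hp⟩
    · exact ⟨0, fun h => absurd h hu⟩
  choose v hv using hrep
  have hkey : ∀ u ∈ U, |(⌊2 * t * u / δ⌋ : ℝ) - (⌊u ^ 2 / δ⌋ - ⌊(v u) ^ 2 / δ⌋) - t ^ 2 / δ| ≤ 11 := by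
    intro u hu
    obtain ⟨h1, h2, h3⟩ := hPmem _ (hv u hu)
    simp only at h1 h2 h3
    have h0 : ((⌊u / δ⌋ : ℝ) - ⌊v u / δ⌋) = (⌊x0 / δ⌋ : ℝ) - ⌊y0 / δ⌋ := by exact_mod_cast h3
    have h4 : |(u - v u - t) / δ| ≤ 2 := by
      have : (u - v u - t) / δ = u / δ - v u / δ - (x0 / δ - y0 / δ) := by rw [ht]; ring
      rw [this, abs_le]
      constructor <;> linarith [Int.floor_le (u / δ), Int.lt_floor_add_one (u / δ),
          Int.floor_le (v u / δ), Int.lt_floor_add_one (v u / δ), Int.floor_le (x0 / δ),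
          Int.lt_floor_add_one (x0 / δ), Int.floor_le (y0 / δ), Int.lt_floor_add_one (y0 / δ)]
    rw [abs_div, abs_of_pos hδ, div_le_iff₀ hδ] at h4
    have h5 := sq_approx δ t u (v u) (u - v u - t) hδ hδ1 (hA0 _ h2).1 (hA0 _ h2).2 h4 (by ring)
    rw [abs_le] at h5 ⊢
    constructor <;> linarith [Int.floor_le (2 * t * u / δ), Int.lt_floor_add_one (2 * t * u / δ),
          Int.floor_le (u ^ 2 / δ), Int.lt_floor_add_one (u ^ 2 / δ),
          Int.floor_le ((v u) ^ 2 / δ), Int.lt_floor_add_one ((v u) ^ 2 / δ), h5.1, h5.2]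
  have hYM : ((Y - M).card : ℝ) ≤ 45 * ((7 * L ^ 3) ^ 3 * n) := by
    have h1 := transfer (U ×ˢ A) (fun p => ⌊p.1 ^ 2 / δ⌋ - ⌊(v p.1) ^ 2 / δ⌋ - ⌊p.2 ^ 2 / δ⌋)
      (fun p => ⌊2 * t * p.1 / δ⌋ - ⌊p.2 ^ 2 / δ⌋) 22 (by
      rintro ⟨a, b⟩ hab ⟨c, d⟩ hcd h
      refine int_abs_le _ _ ?_
      simp only at h ⊢
      have h0 : ((⌊a ^ 2 / δ⌋ : ℝ) - ⌊(v a) ^ 2 / δ⌋ - ⌊b ^ 2 / δ⌋) =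
        (⌊c ^ 2 / δ⌋ : ℝ) - ⌊(v c) ^ 2 / δ⌋ - ⌊d ^ 2 / δ⌋ := by exact_mod_cast h
      have h1 := abs_le.1 (hkey a (Finset.mem_product.1 hab).1)
      have h2 := abs_le.1 (hkey c (Finset.mem_product.1 hcd).1)
      push_cast
      rw [abs_lt]
      constructor <;> linarith [h1.1, h1.2, h2.1, h2.2])
    rw [hY, hMdef, sub_eq_image]
    have h3 : (U ×ˢ A).image (fun p => ⌊p.1 ^ 2 / δ⌋ - ⌊(v p.1) ^ 2 / δ⌋ - ⌊p.2 ^ 2 / δ⌋) ⊆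
        1 • M - 2 • M := by
      intro z hz
      obtain ⟨⟨a, b⟩, hp, rfl⟩ := Finset.mem_image.1 hz
      obtain ⟨ha, hb⟩ := Finset.mem_product.1 hp
      obtain ⟨h1, h2, _⟩ := hPmem _ (hv a ha)
      rw [one_nsmul, two_nsmul, sub_sub]
      exact Finset.sub_mem_sub (Finset.mem_image_of_mem _ h1)
        (Finset.add_mem_add (Finset.mem_image_of_mem _ h2) (Finset.mem_image_of_mem _ hb))
    have h4 := (Nat.cast_le (α := ℝ)).2 (h1.trans (Nat.mul_le_mul_right _ (Finset.card_le_card h3)))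
    push_cast at h4
    norm_num at hpl h4
    linarith
  have htri := Finset.ruzsa_triangle_inequality_add_sub_sub X Y M
  have htri' : ((X + M).card : ℝ) * Y.card ≤ (X - Y).card * (Y - M).card := by exact_mod_cast htri
  rw [← hUP] at hpop
  exact arith3b _ _ _ _ L n r0 _ hL hn hr0 (Nat.cast_nonneg _) (Nat.cast_nonneg _) (Nat.cast_nonneg _)
    htri' hXY hYM hpop hYc

lemma step4 (δ L n r0 : ℝ) (hδ : 0 < δ) (hL : 1000 ≤ L) (A : Finset ℝ)
    (hne : A.Nonempty) (hA : ∀ x ∈ A, 1 / L ≤ x ∧ x ≤ 1)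
    (hsep : ∀ x ∈ A, ∀ y ∈ A, x ≠ y → δ ≤ |x - y|)
    (hn : 0 < n) (hAn : n ≤ L * A.card) (hAn' : (A.card : ℝ) ≤ n)
    (hr0 : 0 < r0)
    (hM : (((A ×ˢ A).image (fun p => ⌊p.1 ^ 2 / δ⌋ - ⌊p.2 ^ 2 / δ⌋)).card : ℝ) ≤ L * n)
    (T : Set ℝ)
    (hT : ∀ t ∈ T, ((A.image (fun x => ⌊2 * t * x / δ⌋) +
      A.image (fun x => ⌊x ^ 2 / δ⌋)).card : ℝ) ≤ L ^ 16 / r0 * n)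
    (t1 t2 t3 t4 : ℝ) (h1 : t1 ∈ T) (h2 : t2 ∈ T) (h3 : t3 ∈ T) (h4 : t4 ∈ T) :
    ((A.image (fun x => ⌊2 * (t1 - t2 + t3 - t4) * x / δ⌋) +
      A.image (fun x => ⌊x ^ 2 / δ⌋)).card : ℝ) ≤ L ^ 116 / r0 ^ 4 *
        (A.image (fun x => ⌊x ^ 2 / δ⌋)).card := by
  have hL0 : 0 < L := by linarith
  set M := A.image (fun x => ⌊x ^ 2 / δ⌋) with hMdef
  have hMne : M.Nonempty := hne.image _
  have hMn : (M.card : ℝ) ≤ n := le_trans (by exact_mod_cast Finset.card_image_le) hAn'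
  have hms := msize δ L hδ (by linarith) A hA hsep
  rw [← hMdef] at hms
  have hnM : n ≤ L ^ 3 * M.card := by
    calc n ≤ L * (7 * L * M.card) := hAn.trans (by gcongr)
      _ = 7 * (L ^ 2 * M.card) := by ring
      _ ≤ L * (L ^ 2 * M.card) := by gcongr; linarith
      _ = _ := by ring
  have hMM : ((M - M).card : ℝ) ≤ L ^ 4 * M.card := by
    rw [hMdef, sub_eq_image, ← hMdef]
    refine hM.trans ?_
    calc L * n ≤ L * (L ^ 3 * M.card) := by gcongr
      _ = _ := by ring
  have hpl := plun M hMne _ n hMM hMn 5 4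
  have hcov : ∀ t ∈ T, ∃ F : Finset ℤ, (F.card : ℝ) ≤ L ^ 19 / r0 ∧
      A.image (fun x => ⌊2 * t * x / δ⌋) ⊆ F + (M - M) := by
    intro t ht
    have h5 := hT t ht
    obtain ⟨F, _, hF, hF2⟩ := Finset.ruzsa_covering_add (K := L ^ 19 / r0) hMne (by
      refine h5.trans ?_
      calc L ^ 16 / r0 * n ≤ L ^ 16 / r0 * (L ^ 3 * M.card) := by gcongr
        _ = _ := by ring)
    exact ⟨F, hF, hF2⟩
  obtain ⟨F1, hF1, hs1⟩ := hcov t1 h1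
  obtain ⟨F2, hF2, hs2⟩ := hcov t2 h2
  obtain ⟨F3, hF3, hs3⟩ := hcov t3 h3
  obtain ⟨F4, hF4, hs4⟩ := hcov t4 h4
  have htr := transfer (A ×ˢ A) (fun p => ⌊2 * t1 * p.1 / δ⌋ - ⌊2 * t2 * p.1 / δ⌋ +
      ⌊2 * t3 * p.1 / δ⌋ - ⌊2 * t4 * p.1 / δ⌋ + ⌊p.2 ^ 2 / δ⌋)
      (fun p => ⌊2 * (t1 - t2 + t3 - t4) * p.1 / δ⌋ + ⌊p.2 ^ 2 / δ⌋) 5 (by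
      rintro ⟨a, b⟩ _ ⟨c, d⟩ _ h
      refine int_abs_le _ _ ?_
      simp only at h ⊢
      have h0 : ((⌊2 * t1 * a / δ⌋ - ⌊2 * t2 * a / δ⌋ + ⌊2 * t3 * a / δ⌋ - ⌊2 * t4 * a / δ⌋ +
        ⌊b ^ 2 / δ⌋ : ℤ) : ℝ) = ((⌊2 * t1 * c / δ⌋ - ⌊2 * t2 * c / δ⌋ + ⌊2 * t3 * c / δ⌋ -
        ⌊2 * t4 * c / δ⌋ + ⌊d ^ 2 / δ⌋ : ℤ) : ℝ) := congrArg _ h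
      push_cast at h0 ⊢
      have ea : 2 * (t1 - t2 + t3 - t4) * a / δ = 2 * t1 * a / δ - 2 * t2 * a / δ +
        2 * t3 * a / δ - 2 * t4 * a / δ := by ring
      have ec : 2 * (t1 - t2 + t3 - t4) * c / δ = 2 * t1 * c / δ - 2 * t2 * c / δ +
        2 * t3 * c / δ - 2 * t4 * c / δ := by ring
      have fa := Int.floor_le (2 * (t1 - t2 + t3 - t4) * a / δ)
      have ga := Int.lt_floor_add_one (2 * (t1 - t2 + t3 - t4) * a / δ)
      have fc := Int.floor_le (2 * (t1 - t2 + t3 - t4) * c / δ)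
      have gc := Int.lt_floor_add_one (2 * (t1 - t2 + t3 - t4) * c / δ)
      rw [abs_lt]
      constructor <;> linarith [Int.floor_le (2 * t1 * a / δ), Int.lt_floor_add_one (2 * t1 * a / δ),
        Int.floor_le (2 * t2 * a / δ), Int.lt_floor_add_one (2 * t2 * a / δ),
        Int.floor_le (2 * t3 * a / δ), Int.lt_floor_add_one (2 * t3 * a / δ),
        Int.floor_le (2 * t4 * a / δ), Int.lt_floor_add_one (2 * t4 * a / δ),
        Int.floor_le (2 * t1 * c / δ), Int.lt_floor_add_one (2 * t1 * c / δ),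
        Int.floor_le (2 * t2 * c / δ), Int.lt_floor_add_one (2 * t2 * c / δ),
        Int.floor_le (2 * t3 * c / δ), Int.lt_floor_add_one (2 * t3 * c / δ),
        Int.floor_le (2 * t4 * c / δ), Int.lt_floor_add_one (2 * t4 * c / δ)])
  have hsub : (A ×ˢ A).image (fun p => ⌊2 * t1 * p.1 / δ⌋ - ⌊2 * t2 * p.1 / δ⌋ +
      ⌊2 * t3 * p.1 / δ⌋ - ⌊2 * t4 * p.1 / δ⌋ + ⌊p.2 ^ 2 / δ⌋) ⊆
      (F1 - F2 + F3 - F4) + (5 • M - 4 • M) := by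
    intro z hz
    obtain ⟨⟨a, b⟩, hp, rfl⟩ := Finset.mem_image.1 hz
    obtain ⟨ha, hb⟩ := Finset.mem_product.1 hp
    simp only at ha hb ⊢
    obtain ⟨f1, hf1, d1, hd1, e1⟩ := Finset.mem_add.1 (hs1 (Finset.mem_image_of_mem _ ha))
    obtain ⟨f2, hf2, d2, hd2, e2⟩ := Finset.mem_add.1 (hs2 (Finset.mem_image_of_mem _ ha))
    obtain ⟨f3, hf3, d3, hd3, e3⟩ := Finset.mem_add.1 (hs3 (Finset.mem_image_of_mem _ ha))
    obtain ⟨f4, hf4, d4, hd4, e4⟩ := Finset.mem_add.1 (hs4 (Finset.mem_image_of_mem _ ha))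
    obtain ⟨p1, hp1, q1, hq1, g1⟩ := Finset.mem_sub.1 hd1
    obtain ⟨p2, hp2, q2, hq2, g2⟩ := Finset.mem_sub.1 hd2
    obtain ⟨p3, hp3, q3, hq3, g3⟩ := Finset.mem_sub.1 hd3
    obtain ⟨p4, hp4, q4, hq4, g4⟩ := Finset.mem_sub.1 hd4
    have hbM : ⌊b ^ 2 / δ⌋ ∈ M := Finset.mem_image_of_mem _ hb
    rw [← e1, ← e2, ← e3, ← e4, ← g1, ← g2, ← g3, ← g4]
    have m5 : p1 + q2 + p3 + q4 + ⌊b ^ 2 / δ⌋ ∈ 5 • M := by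
      have : 5 • M = M + M + M + M + M := by simp only [succ_nsmul, zero_nsmul, zero_add]
      rw [this]
      exact Finset.add_mem_add (Finset.add_mem_add (Finset.add_mem_add (Finset.add_mem_add hp1 hq2) hp3) hq4) hbM
    have m4 : q1 + p2 + q3 + p4 ∈ 4 • M := by
      have : 4 • M = M + M + M + M := by simp only [succ_nsmul, zero_nsmul, zero_add]
      rw [this]
      exact Finset.add_mem_add (Finset.add_mem_add (Finset.add_mem_add hq1 hp2) hq3) hp4
    have mf : f1 - f2 + f3 - f4 ∈ F1 - F2 + F3 - F4 :=
      Finset.sub_mem_sub (Finset.add_mem_add (Finset.sub_mem_sub hf1 hf2) hf3) hf4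
    have := Finset.add_mem_add mf (Finset.sub_mem_sub m5 m4)
    convert this using 1
    ring
  have hcard : ((F1 - F2 + F3 - F4) + (5 • M - 4 • M)).card ≤
      (F1.card * F2.card * F3.card * F4.card) * (5 • M - 4 • M).card := by
    refine Finset.card_add_le.trans (Nat.mul_le_mul_right _ ?_)
    refine Finset.card_sub_le.trans (Nat.mul_le_mul_right _ ?_)
    refine Finset.card_add_le.trans (Nat.mul_le_mul_right _ ?_)
    exact Finset.card_sub_le
  have hall := (Nat.cast_le (α := ℝ)).2 (htr.trans (Nat.mul_le_mul_right _
    ((Finset.card_le_card hsub).trans hcard)))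
  push_cast at hall
  rw [hMdef, add_eq_image, ← hMdef]
  refine hall.trans ?_
  set k := L ^ 19 / r0 with hk
  have hk0 : 0 < k := by positivity
  calc _ ≤ (k * k * k * k) * ((L ^ 4) ^ (5 + 4) * (L ^ 3 * M.card)) * 11 := by
        gcongr
        exact hpl.trans (by gcongr)
    _ = 11 * (L ^ 115 / r0 ^ 4 * M.card) := by rw [hk]; field_simp; ring
    _ ≤ L * (L ^ 115 / r0 ^ 4 * M.card) := by gcongr; linarith
    _ = _ := by ring

lemma local_lemma (X X' Z : Finset ℤ) (Λ : ℤ) (hΛ : 0 < Λ) (hX : ∀ x ∈ X, |x| ≤ Λ)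
    (hX' : ∀ x ∈ X', |x| ≤ Λ) (B : ℝ) (hZ : Z.Nonempty)
    (h : ((X + Z).card : ℝ) ≤ B * Z.card) (h' : ((X' + Z).card : ℝ) ≤ B * Z.card) :
    ∃ j, ((X - X').card : ℝ) ≤ 36 * B ^ 2 * (Z.filter (fun z => z / Λ = j)).card := by
  let J := Z.image (fun z => z / Λ)
  let Zj : ℤ → Finset ℤ := fun j => Z.filter (fun z => z / Λ = j)
  have hJ : J.Nonempty := hZ.image _
  have key : ∀ Y : Finset ℤ, (∀ x ∈ Y, |x| ≤ Λ) → ∑ j ∈ J, (Y + Zj j).card ≤ 3 * (Y + Z).card := by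
    intro Y hY
    calc ∑ j ∈ J, (Y + Zj j).card
        ≤ ∑ j ∈ J, (Finset.bipartiteAbove (fun j v => j - 1 ≤ v / Λ ∧ v / Λ ≤ j + 1) (Y + Z) j).card := by
          refine Finset.sum_le_sum fun j _ => Finset.card_le_card ?_
          intro v hv
          obtain ⟨x, hx, z, hz, rfl⟩ := Finset.mem_add.1 hv
          obtain ⟨hz1, hz2⟩ := Finset.mem_filter.1 hz
          simp only [Finset.bipartiteAbove, Finset.mem_filter]
          refine ⟨Finset.add_mem_add hx hz1, ?_, ?_⟩
          · have h1 := abs_le.1 (hY x hx)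
            have h2 := Int.ediv_mul_le z hΛ.ne'
            rw [hz2] at h2
            rw [Int.le_ediv_iff_mul_le hΛ]
            nlinarith [h1.1]
          · have h1 := abs_le.1 (hY x hx)
            have h2 := Int.lt_ediv_add_one_mul_self z hΛ
            rw [hz2] at h2
            refine Int.lt_add_one_iff.1 ?_
            rw [Int.ediv_lt_iff_lt_mul hΛ]
            nlinarith [h1.2]
      _ = ∑ v ∈ Y + Z, (Finset.bipartiteBelow (fun j v => j - 1 ≤ v / Λ ∧ v / Λ ≤ j + 1) J v).card :=
          Finset.sum_card_bipartiteAbove_eq_sum_card_bipartiteBelow _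
      _ ≤ ∑ v ∈ Y + Z, 3 := by
          refine Finset.sum_le_sum fun v _ => ?_
          have : Finset.bipartiteBelow (fun j v => j - 1 ≤ v / Λ ∧ v / Λ ≤ j + 1) J v ⊆
              Finset.Icc (v / Λ - 1) (v / Λ + 1) := by
            intro j hj
            have := (Finset.mem_filter.1 hj).2
            rw [Finset.mem_Icc]; omega
          refine (Finset.card_le_card this).trans ?_
          rw [Int.card_Icc]; omega
      _ = _ := by simp [mul_comm]
  have hsum : ∑ j ∈ J, (Zj j).card = Z.card :=
    (Finset.card_eq_sum_card_fiberwise (fun p hp => Finset.mem_image_of_mem _ hp)).symm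
  have k1 : ∑ j ∈ J, ((X + Zj j).card : ℝ) ≤ 3 * (X + Z).card := by exact_mod_cast key X hX
  have k2 : ∑ j ∈ J, ((X' + Zj j).card : ℝ) ≤ 3 * (X' + Z).card := by exact_mod_cast key X' hX'
  have hsum' : ∑ j ∈ J, ((Zj j).card : ℝ) = Z.card := by exact_mod_cast hsum
  obtain ⟨j, hj, hle⟩ := Finset.exists_le_of_sum_le hJ (f := fun j => ((X + Zj j).card : ℝ) + (X' + Zj j).card)
    (g := fun j => 6 * B * (Zj j).card) (by
      rw [Finset.sum_add_distrib, ← Finset.mul_sum, hsum']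
      linarith)
  refine ⟨j, ?_⟩
  have hne : (Zj j).Nonempty := by
    obtain ⟨z, hz, hzj⟩ := Finset.mem_image.1 hj
    exact ⟨z, Finset.mem_filter.2 ⟨hz, hzj⟩⟩
  have hpos : (0:ℝ) < (Zj j).card := by exact_mod_cast hne.card_pos
  have htri : ((X - X').card : ℝ) * (Zj j).card ≤ (X + Zj j).card * (X' + Zj j).card := by
    exact_mod_cast Finset.ruzsa_triangle_inequality_sub_add_add X (Zj j) X'
  have e1 : (0:ℝ) ≤ (X + Zj j).card := Nat.cast_nonneg _
  have e2 : (0:ℝ) ≤ (X' + Zj j).card := Nat.cast_nonneg _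
  change ((X - X').card : ℝ) ≤ 36 * B ^ 2 * (Zj j).card
  refine le_of_mul_le_mul_right ?_ hpos
  calc _ ≤ _ := htri
    _ ≤ (6 * B * (Zj j).card) * (6 * B * (Zj j).card) := mul_le_mul (by linarith) (by linarith) e2 (by linarith)
    _ = _ := by ring

lemma step5 (δ L n s : ℝ) (hδ : 0 < δ) (hs0 : 0 < s) (hs1 : s < 1) (hL : 1 ≤ L) (A : Finset ℝ)
    (hne : A.Nonempty) (hA : ∀ x ∈ A, 1 / L ≤ x ∧ x ≤ 1) (hn : 0 < n)
    (hF : ∀ x l : ℝ, δ ≤ l →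
      ((A.filter (fun t => t ∈ Set.Icc x (x + l))).card : ℝ) ≤ L * l ^ s * n)
    (B w w' R : ℝ) (hR : δ ≤ R) (hw : |2 * w| ≤ R) (hw' : |2 * w'| ≤ R)
    (h1 : ((A.image (fun x => ⌊2 * w * x / δ⌋) + A.image (fun x => ⌊x ^ 2 / δ⌋)).card : ℝ) ≤
      B * (A.image (fun x => ⌊x ^ 2 / δ⌋)).card)
    (h2 : ((A.image (fun x => ⌊2 * w' * x / δ⌋) + A.image (fun x => ⌊x ^ 2 / δ⌋)).card : ℝ) ≤
      B * (A.image (fun x => ⌊x ^ 2 / δ⌋)).card) :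
    (((A ×ˢ A).image (fun p => ⌊2 * w * p.1 / δ⌋ - ⌊2 * w' * p.2 / δ⌋)).card : ℝ) ≤
      36 * B ^ 2 * (L ^ 2 * R ^ s * n) := by
  have hL0 : 0 < L := by linarith
  have hR0 : 0 < R := by linarith
  have hA0 : ∀ x ∈ A, 0 < x := fun x hx =>
    lt_of_lt_of_le (by positivity : (0:ℝ) < 1 / L) (hA x hx).1
  have hΛ : 0 < ⌈R / δ⌉ := Int.ceil_pos.2 (by positivity)
  have hbd : ∀ w : ℝ, |2 * w| ≤ R → ∀ z ∈ A.image (fun x => ⌊2 * w * x / δ⌋), |z| ≤ ⌈R / δ⌉ := by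
    intro w hw z hz
    obtain ⟨x, hx, rfl⟩ := Finset.mem_image.1 hz
    have h3 : |2 * w * x / δ| ≤ R / δ := by
      rw [abs_div, abs_of_pos hδ, abs_mul, abs_of_pos (hA0 x hx)]
      gcongr
      calc |2 * w| * x ≤ R * 1 := mul_le_mul hw (hA x hx).2 (hA0 x hx).le hR0.le
        _ = R := mul_one R
    have h4 := Int.le_ceil (R / δ)
    rw [abs_le] at h3 ⊢
    constructor
    · rw [Int.le_floor]; push_cast; linarith [h3.1]
    · refine Int.floor_le_iff.2 ?_
      linarith [h3.2]
  obtain ⟨j, hj⟩ := local_lemma _ _ _ _ hΛ (hbd w hw) (hbd w' hw') B (hne.image _) h1 h2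
  rw [sub_eq_image] at hj
  refine hj.trans ?_
  refine mul_le_mul_of_nonneg_left ?_ (by positivity)
  set S := A.filter (fun x => ⌊x ^ 2 / δ⌋ / ⌈R / δ⌉ = j) with hS
  have h3 : (A.image (fun x => ⌊x ^ 2 / δ⌋)).filter (fun z => z / ⌈R / δ⌉ = j) ⊆
      S.image (fun x => ⌊x ^ 2 / δ⌋) := by
    intro z hz
    obtain ⟨hz1, hz2⟩ := Finset.mem_filter.1 hz
    obtain ⟨x, hx, rfl⟩ := Finset.mem_image.1 hz1
    exact Finset.mem_image_of_mem _ (Finset.mem_filter.2 ⟨hx, hz2⟩)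
  have h4 : (((A.image (fun x => ⌊x ^ 2 / δ⌋)).filter (fun z => z / ⌈R / δ⌉ = j)).card : ℝ) ≤ S.card :=
    by exact_mod_cast (Finset.card_le_card h3).trans Finset.card_image_le
  refine h4.trans ?_
  rcases S.eq_empty_or_nonempty with h0 | h0
  · rw [h0]; simp; positivity
  set x0 := S.min' h0
  have hx0 : x0 ∈ S := S.min'_mem h0
  have h5 : S ⊆ A.filter (fun t => t ∈ Set.Icc x0 (x0 + R * L)) := by
    intro x hx
    have hxx := S.min'_le x hx
    obtain ⟨ha, hb⟩ := Finset.mem_filter.1 hx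
    obtain ⟨ha0, hb0⟩ := Finset.mem_filter.1 hx0
    refine Finset.mem_filter.2 ⟨ha, hxx, ?_⟩
    have g1 := Int.lt_ediv_add_one_mul_self ⌊x ^ 2 / δ⌋ hΛ
    have g2 := Int.ediv_mul_le ⌊x0 ^ 2 / δ⌋ hΛ.ne'
    rw [hb] at g1
    rw [hb0] at g2
    have g3 : ⌊x ^ 2 / δ⌋ - ⌊x0 ^ 2 / δ⌋ + 1 ≤ ⌈R / δ⌉ := by linarith
    have g4 : (⌊x ^ 2 / δ⌋ : ℝ) - ⌊x0 ^ 2 / δ⌋ + 1 ≤ ⌈R / δ⌉ := by exact_mod_cast g3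
    have g5 : x ^ 2 / δ - x0 ^ 2 / δ ≤ R / δ + 1 := by
      linarith [Int.lt_floor_add_one (x ^ 2 / δ), Int.floor_le (x0 ^ 2 / δ), Int.ceil_lt_add_one (R / δ)]
    have g6 : x ^ 2 - x0 ^ 2 ≤ 2 * R := by
      have : (x ^ 2 / δ - x0 ^ 2 / δ) * δ ≤ (R / δ + 1) * δ := mul_le_mul_of_nonneg_right g5 hδ.le
      have e1 : (x ^ 2 / δ - x0 ^ 2 / δ) * δ = x ^ 2 - x0 ^ 2 := by field_simp
      have e2 : (R / δ + 1) * δ = R + δ := by field_simp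
      linarith
    have g7 : (x - x0) * (2 / L) ≤ 2 * R := by
      calc (x - x0) * (2 / L) ≤ (x - x0) * (x + x0) := by
            refine mul_le_mul_of_nonneg_left ?_ (by linarith)
            have := (hA x ha).1; have := (hA x0 ha0).1
            have : 2 / L = 1 / L + 1 / L := by ring
            linarith
        _ = x ^ 2 - x0 ^ 2 := by ring
        _ ≤ _ := g6
    rw [mul_div_assoc', div_le_iff₀ hL0] at g7
    linarith
  have h6 := hF x0 (R * L) (by nlinarith)
  have h7 : (S.card : ℝ) ≤ _ := le_trans (by exact_mod_cast Finset.card_le_card h5) h6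
  refine h7.trans ?_
  rw [Real.mul_rpow hR0.le hL0.le]
  have h8 : L ^ s ≤ L := by
    calc L ^ s ≤ L ^ (1:ℝ) := Real.rpow_le_rpow_of_exponent_le hL hs1.le
      _ = L := Real.rpow_one L
  have h9 : 0 < R ^ s := by positivity
  calc L * (R ^ s * L ^ s) * n ≤ L * (R ^ s * L) * n := by gcongr
    _ = _ := by ring

structure Piv (δ L n s : ℝ) (A : Finset ℝ) : Prop where
  hδ : 0 < δ
  hδ1 : δ ≤ 1
  hs0 : 0 < s
  hs1 : s < 1
  hL : 1000 ≤ L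
  hA : ∀ x ∈ A, 0 ≤ x ∧ x ≤ 1
  hn : 0 < n
  hAn : n ≤ L * A.card
  hAn' : (A.card : ℝ) ≤ n
  hnd : n * δ ^ s ≤ 2
  hF : ∀ x l : ℝ, δ ≤ l →
      ((A.filter (fun t => t ∈ Set.Icc x (x + l))).card : ℝ) ≤ L * l ^ s * n
  hP : ∀ t1 ∈ A, ∀ t2 ∈ A, ∀ t3 ∈ A, ∀ t4 ∈ A, ∀ u1 ∈ A, ∀ u2 ∈ A, ∀ u3 ∈ A, ∀ u4 ∈ A,
      ∀ R : ℝ, δ ≤ R → |2 * (t1 - t2 + t3 - t4)| ≤ R → |2 * (u1 - u2 + u3 - u4)| ≤ R →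
      (((A ×ˢ A).image (fun p => ⌊2 * (t1 - t2 + t3 - t4) * p.1 / δ⌋ -
        ⌊2 * (u1 - u2 + u3 - u4) * p.2 / δ⌋)).card : ℝ) ≤ L * R ^ s * n

lemma card_le_real {α β : Type*} [DecidableEq β] (S : Finset α) (f : α → β) (c : ℝ)
    (h : ∀ a ∈ S.image f, ((S.filter (fun x => f x = a)).card : ℝ) ≤ c) :
    (S.card : ℝ) ≤ c * (S.image f).card := by
  rw [Finset.card_eq_sum_card_image f S]
  push_cast
  refine (Finset.sum_le_sum h).trans ?_
  simp [mul_comm]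

lemma Piv.frost {δ L n s : ℝ} {A : Finset ℝ} (P : Piv δ L n s A) (S : Finset ℝ) (hS : S ⊆ A)
    (c D : ℝ) (hD : δ ≤ 2 * D) (h : ∀ x ∈ S, |x - c| ≤ D) :
    (S.card : ℝ) ≤ L * (2 * D) ^ s * n := by
  refine le_trans ?_ (P.hF (c - D) (2 * D) hD)
  refine Nat.cast_le.2 (Finset.card_le_card ?_)
  intro x hx
  have := abs_le.1 (h x hx)
  exact Finset.mem_filter.2 ⟨hS hx, by linarith [this.1], by linarith [this.2]⟩

lemma floor_coll (δ T T' x y z v : ℝ) (hδ : 0 < δ)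
    (h : ⌊T * x / δ⌋ - ⌊T' * y / δ⌋ = ⌊T * z / δ⌋ - ⌊T' * v / δ⌋) :
    |T * (x - z) - T' * (y - v)| < 2 * δ := by
  have h0 : ((⌊T * x / δ⌋ : ℝ) - ⌊T' * y / δ⌋) = (⌊T * z / δ⌋ : ℝ) - ⌊T' * v / δ⌋ := by exact_mod_cast h
  have h1 : |T * x / δ - T' * y / δ - (T * z / δ - T' * v / δ)| < 2 := by
    rw [abs_lt]
    constructor <;> linarith [Int.floor_le (T * x / δ), Int.lt_floor_add_one (T * x / δ),
          Int.floor_le (T' * y / δ), Int.lt_floor_add_one (T' * y / δ), Int.floor_le (T * z / δ),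
          Int.lt_floor_add_one (T * z / δ), Int.floor_le (T' * v / δ), Int.lt_floor_add_one (T' * v / δ)]
  have h2 : T * x / δ - T' * y / δ - (T * z / δ - T' * v / δ) = (T * (x - z) - T' * (y - v)) / δ := by ring
  rw [h2, abs_div, abs_of_pos hδ, div_lt_iff₀ hδ] at h1
  exact h1

lemma arith_noncol (L n s δ T r c I : ℝ) (hL : 1000 ≤ L) (hδ : 0 < δ) (hs0 : 0 < s) (hs1 : s < 1)
    (hT : 0 < T) (hr : 0 < r) (hn : 0 < n) (hAn : n ≤ L * c) (hnd : n * δ ^ s ≤ 2)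
    (hrs : r ^ s * L ^ 6 ≤ 1)
    (hI : I ≤ L * (2 * T) ^ s * n)
    (h : c ^ 2 ≤ (L * (2 * (2 * δ / T)) ^ s * n * (L * (2 * r) ^ s * n)) * I) : False := by
  have hL0 : 0 < L := by linarith
  have e1 : (2 * T) ^ s * (2 * (2 * δ / T)) ^ s * (2 * r) ^ s = (16:ℝ) ^ s * δ ^ s * r ^ s := by
    rw [← Real.mul_rpow (by positivity) (by positivity), ← Real.mul_rpow (by positivity) (by positivity),
      ← Real.mul_rpow (by positivity) (by positivity), ← Real.mul_rpow (by positivity) (by positivity)]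
    congr 1
    field_simp
    ring
  have e2 : (16:ℝ) ^ s ≤ 16 := by
    calc (16:ℝ) ^ s ≤ 16 ^ (1:ℝ) := Real.rpow_le_rpow_of_exponent_le (by norm_num) hs1.le
      _ = 16 := Real.rpow_one _
  have hds : 0 < δ ^ s := by positivity
  have hrs0 : 0 < r ^ s := by positivity
  have h1 : c ^ 2 ≤ 32 * L ^ 3 * r ^ s * n ^ 2 := by
    calc c ^ 2 ≤ (L * (2 * (2 * δ / T)) ^ s * n * (L * (2 * r) ^ s * n)) * (L * (2 * T) ^ s * n) :=
          h.trans (mul_le_mul_of_nonneg_left hI (by positivity))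
      _ = L ^ 3 * n ^ 3 * ((2 * T) ^ s * (2 * (2 * δ / T)) ^ s * (2 * r) ^ s) := by ring
      _ = L ^ 3 * n ^ 3 * ((16:ℝ) ^ s * δ ^ s * r ^ s) := by rw [e1]
      _ ≤ L ^ 3 * n ^ 3 * (16 * δ ^ s * r ^ s) := by gcongr
      _ = 16 * L ^ 3 * n ^ 2 * r ^ s * (n * δ ^ s) := by ring
      _ ≤ 16 * L ^ 3 * n ^ 2 * r ^ s * 2 := by gcongr
      _ = _ := by ring
  have h2 : n ^ 2 ≤ 32 * (L ^ 5 * r ^ s) * n ^ 2 := by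
    calc n ^ 2 ≤ (L * c) ^ 2 := by gcongr
      _ = L ^ 2 * c ^ 2 := by ring
      _ ≤ L ^ 2 * (32 * L ^ 3 * r ^ s * n ^ 2) := by gcongr
      _ = _ := by ring
  have h3 : 1 ≤ 32 * (L ^ 5 * r ^ s) := by
    refine le_of_mul_le_mul_right ?_ (by positivity : 0 < n ^ 2)
    linarith
  have h4 : L * (L ^ 5 * r ^ s) ≤ 1 := by
    calc _ = r ^ s * L ^ 6 := by ring
      _ ≤ 1 := hrs
  have h5 : 0 < L ^ 5 * r ^ s := by positivity
  nlinarith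

lemma Piv.noncol {δ L n s : ℝ} {A : Finset ℝ} (P : Piv δ L n s A) (T T' r : ℝ)
    (hr : 0 < r) (hδr : δ ≤ 2 * r) (hT : 0 < |T|) (hT4 : |T| ≤ 4) (hrs : r ^ s * L ^ 6 ≤ 1)
    (hI : (((A ×ˢ A).image (fun p => ⌊T * p.1 / δ⌋ - ⌊T' * p.2 / δ⌋)).card : ℝ) ≤
      L * (2 * |T|) ^ s * n) :
    ∃ x ∈ A, ∃ y ∈ A, ∃ z ∈ A, ∃ v ∈ A, |T * (x - z) - T' * (y - v)| < 2 * δ ∧ r ≤ |y - v| := by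
  by_contra hcon
  push Not at hcon
  have hL0 : 0 < L := by linarith [P.hL]
  have hn := P.hn
  have hδ := P.hδ
  refine arith_noncol L n s δ |T| r A.card _ P.hL P.hδ P.hs0 P.hs1 hT hr P.hn P.hAn P.hnd hrs hI ?_
  have hcard : ((A ×ˢ A).card : ℝ) = (A.card : ℝ) ^ 2 := by
    rw [Finset.card_product]; push_cast; ring
  rw [← hcard]
  refine card_le_real _ _ _ ?_
  intro a ha
  obtain ⟨⟨z, v⟩, hzv, hzva⟩ := Finset.mem_image.1 ha
  obtain ⟨hz, hv⟩ := Finset.mem_product.1 hzv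
  simp only at hz hv
  set F := (A ×ˢ A).filter (fun p => ⌊T * p.1 / δ⌋ - ⌊T' * p.2 / δ⌋ = a) with hF
  have hFm : ∀ p ∈ F, p.1 ∈ A ∧ p.2 ∈ A ∧ ⌊T * p.1 / δ⌋ - ⌊T' * p.2 / δ⌋ = a := by
    intro p hp
    obtain ⟨h1, h2⟩ := Finset.mem_filter.1 hp
    exact ⟨(Finset.mem_product.1 h1).1, (Finset.mem_product.1 h1).2, h2⟩
  have h1 : ((F.image Prod.snd).card : ℝ) ≤ L * (2 * r) ^ s * n := by
    refine P.frost _ ?_ v r hδr ?_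
    · intro y hy
      obtain ⟨p, hp, rfl⟩ := Finset.mem_image.1 hy
      exact (hFm p hp).2.1
    · intro y hy
      obtain ⟨p, hp, rfl⟩ := Finset.mem_image.1 hy
      obtain ⟨q1, q2, q3⟩ := hFm p hp
      exact (hcon p.1 q1 p.2 q2 z hz v hv (floor_coll δ T T' _ _ _ _ hδ (q3.trans hzva.symm))).le
  have h2 : (F.card : ℝ) ≤ (L * (2 * (2 * δ / |T|)) ^ s * n) * (F.image Prod.snd).card := by
    refine card_le_real _ _ _ ?_
    intro y hy
    obtain ⟨p0, hp0, rfl⟩ := Finset.mem_image.1 hy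
    set H := F.filter (fun x => x.2 = p0.2) with hH
    have hinj : (H.image Prod.fst).card = H.card := by
      refine Finset.card_image_of_injOn ?_
      rintro ⟨a, b⟩ hp ⟨a', b'⟩ hp' h
      have h1 := (Finset.mem_filter.1 hp).2
      have h2 := (Finset.mem_filter.1 hp').2
      simp only at h h1 h2
      rw [h, h1, h2]
    rw [← hinj]
    refine P.frost _ ?_ p0.1 (2 * δ / |T|) ?_ ?_
    · intro y hy
      obtain ⟨p, hp, rfl⟩ := Finset.mem_image.1 hy
      exact (hFm p (Finset.mem_filter.1 hp).1).1
    · rw [mul_div_assoc', le_div_iff₀ hT]; nlinarith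
    · intro y hy
      obtain ⟨p, hp, rfl⟩ := Finset.mem_image.1 hy
      obtain ⟨q1, q2, q3⟩ := hFm p (Finset.mem_filter.1 hp).1
      obtain ⟨r1, r2, r3⟩ := hFm p0 hp0
      have q4 := (Finset.mem_filter.1 hp).2
      have h5 := floor_coll δ T T' _ _ _ _ hδ (q3.trans r3.symm)
      rw [q4, sub_self, mul_zero, sub_zero, abs_mul] at h5
      rw [le_div_iff₀ hT]
      linarith
  refine h2.trans ?_
  refine mul_le_mul_of_nonneg_left h1 ?_
  positivity

/-- the quotient set -/
def Quo (A : Finset ℝ) (r ξ : ℝ) : Prop :=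
  ∃ t1 ∈ A, ∃ t2 ∈ A, ∃ t3 ∈ A, ∃ t4 ∈ A, r ≤ |t3 - t4| ∧ ξ = (t1 - t2) / (t3 - t4)

lemma Piv.caseA {δ L n s : ℝ} {A : Finset ℝ} (P : Piv δ L n s A) (r ρ : ℝ)
    (hr : 0 < r) (hδr : δ ≤ 2 * r) (hrs : r ^ s * L ^ 6 ≤ 1) (hρ : δ ≤ ρ * r ^ 2)
    (ξ : ℝ) (hQ : Quo A r ξ) (hξ : |ξ| ≤ 2) (e : ℝ) (he : e = 0 ∨ e = 1) :
    ∃ ξ', Quo A r ξ' ∧ |ξ' - (ξ + e) / 2| ≤ ρ := by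
  obtain ⟨t1, h1, t2, h2, t3, h3, t4, h4, hd, rfl⟩ := hQ
  have hδ := P.hδ
  have hd0 : 0 < |t3 - t4| := by linarith
  have hd' : t3 - t4 ≠ 0 := abs_pos.1 hd0
  have hd1 : |t3 - t4| ≤ 1 := by
    rw [abs_le]; constructor <;> linarith [P.hA _ h3, P.hA _ h4, (P.hA _ h3).1, (P.hA _ h4).1, (P.hA _ h3).2, (P.hA _ h4).2]
  rw [abs_div, div_le_iff₀ hd0] at hξ
  have hTe : |2 * (t3 - t4 + t3 - t4)| = 4 * |t3 - t4| := by
    have : 2 * (t3 - t4 + t3 - t4) = 4 * (t3 - t4) := by ring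
    rw [this, abs_mul]; norm_num
  have hT4' : 2 * (t3 - t4 + t3 - t4) = 4 * (t3 - t4) := by ring
  have hmain : ∃ T', T' / (2 * (t3 - t4 + t3 - t4)) = ((t1 - t2) / (t3 - t4) + e) / 2 ∧
    (((A ×ˢ A).image (fun p => ⌊2 * (t3 - t4 + t3 - t4) * p.1 / δ⌋ - ⌊T' * p.2 / δ⌋)).card : ℝ) ≤
      L * (2 * |2 * (t3 - t4 + t3 - t4)|) ^ s * n := by
    rcases he with rfl | rfl
    · refine ⟨2 * (t1 - t2 + t1 - t1), ?_, ?_⟩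
      · rw [hT4']; field_simp; ring
      · refine P.hP t3 h3 t4 h4 t3 h3 t4 h4 t1 h1 t2 h2 t1 h1 t1 h1 _ ?_ ?_ ?_
        · rw [hTe]; linarith
        · linarith [abs_nonneg (2 * (t3 - t4 + t3 - t4))]
        · rw [hTe]
          have : 2 * (t1 - t2 + t1 - t1) = 2 * (t1 - t2) := by ring
          rw [this, abs_mul, abs_of_pos (by norm_num : (0:ℝ) < 2)]
          linarith
    · refine ⟨2 * (t1 - t2 + t3 - t4), ?_, ?_⟩
      · rw [hT4']; field_simp; ring
      · refine P.hP t3 h3 t4 h4 t3 h3 t4 h4 t1 h1 t2 h2 t3 h3 t4 h4 _ ?_ ?_ ?_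
        · rw [hTe]; linarith
        · linarith [abs_nonneg (2 * (t3 - t4 + t3 - t4))]
        · rw [hTe]
          have : 2 * (t1 - t2 + t3 - t4) = 2 * ((t1 - t2) + (t3 - t4)) := by ring
          rw [this, abs_mul, abs_of_pos (by norm_num : (0:ℝ) < 2)]
          linarith [abs_add_le (t1 - t2) (t3 - t4)]
  obtain ⟨T', hT', hI⟩ := hmain
  obtain ⟨x, hx, y, hy, z, hz, v, hv, hc, hyv⟩ := P.noncol (2 * (t3 - t4 + t3 - t4)) T' r hr hδr
    (by rw [hTe]; linarith) (by rw [hTe]; linarith) hrs hI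
  refine ⟨(x - z) / (y - v), ⟨x, hx, z, hz, y, hy, v, hv, hyv, rfl⟩, ?_⟩
  rw [← hT']
  set T := 2 * (t3 - t4 + t3 - t4) with hT
  have hTpos : 0 < |T| := by rw [hTe]; linarith
  have hyv0 : 0 < |y - v| := by linarith
  have e1 : (x - z) / (y - v) - T' / T = (T * (x - z) - T' * (y - v)) / (T * (y - v)) := by
    have := abs_pos.1 hTpos
    have := abs_pos.1 hyv0
    field_simp
  rw [e1, abs_div, abs_mul, div_le_iff₀ (by positivity)]
  have e2 : 4 * r * r ≤ |T| * |y - v| := by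
    refine mul_le_mul ?_ hyv hr.le hTpos.le
    rw [hTe]; linarith
  have hρ0 : 0 < ρ := by
    by_contra hh
    push Not at hh
    nlinarith [sq_nonneg r]
  nlinarith [mul_le_mul_of_nonneg_left e2 hρ0.le]

lemma Piv.dyadic {δ L n s : ℝ} {A : Finset ℝ} (P : Piv δ L n s A) (r ρ : ℝ)
    (hr : 0 < r) (hδr : δ ≤ 2 * r) (hrs : r ^ s * L ^ 6 ≤ 1) (hρ : δ ≤ ρ * r ^ 2) (hρ1 : ρ ≤ 1 / 2)
    (hρ0 : 0 < ρ)
    (t3 t4 : ℝ) (h3 : t3 ∈ A) (h4 : t4 ∈ A) (h34 : r ≤ |t3 - t4|) (m : ℕ) :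
    ∀ j : ℕ, j ≤ 2 ^ m → ∃ ξ, Quo A r ξ ∧ |ξ - j / 2 ^ m| ≤ 2 * ρ := by
  have hd' : t3 - t4 ≠ 0 := abs_pos.1 (by linarith)
  induction m with
  | zero =>
    intro j hj
    have : j = 0 ∨ j = 1 := by simp at hj; omega
    rcases this with rfl | rfl
    · exact ⟨0, ⟨t3, h3, t3, h3, t3, h3, t4, h4, h34, by simp⟩, by simp; linarith⟩
    · exact ⟨1, ⟨t3, h3, t4, h4, t3, h3, t4, h4, h34, by field_simp⟩, by simp; linarith⟩
  | succ m ih =>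
    intro j hj
    have hstep : ∀ (i : ℕ) (e : ℝ), i ≤ 2 ^ m → (e = 0 ∨ e = 1) → ((j:ℝ) / 2 ^ (m + 1) = (i / 2 ^ m + e) / 2) →
        ∃ ξ, Quo A r ξ ∧ |ξ - j / 2 ^ (m + 1)| ≤ 2 * ρ := by
      intro i e hi he hje
      obtain ⟨ξ, hq, hx⟩ := ih i hi
      have hi1 : (i:ℝ) / 2 ^ m ≤ 1 := by
        rw [div_le_one (by positivity)]; exact_mod_cast hi
      have hi0 : 0 ≤ (i:ℝ) / 2 ^ m := by positivity
      rw [abs_le] at hx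
      obtain ⟨ξ', hq', hx'⟩ := P.caseA r ρ hr hδr hrs hρ ξ hq
        (by rw [abs_le]; constructor <;> linarith [hx.1, hx.2]) e he
      refine ⟨ξ', hq', ?_⟩
      rw [hje]
      rw [abs_le] at hx' ⊢
      constructor <;> linarith [hx.1, hx.2, hx'.1, hx'.2]
    by_cases hjm : j ≤ 2 ^ m
    · exact hstep j 0 hjm (Or.inl rfl) (by rw [pow_succ]; field_simp; ring)
    · push Not at hjm
      refine hstep (j - 2 ^ m) 1 (by rw [pow_succ] at hj; omega) (Or.inr rfl) ?_
      rw [Nat.cast_sub hjm.le, pow_succ]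
      push_cast
      field_simp
      ring

lemma Piv.dense {δ L n s : ℝ} {A : Finset ℝ} (P : Piv δ L n s A) (r ρ : ℝ)
    (hr : 0 < r) (hδr : δ ≤ 2 * r) (hrs : r ^ s * L ^ 6 ≤ 1) (hρ : δ ≤ ρ * r ^ 2) (hρ1 : ρ ≤ 1 / 2)
    (hρ0 : 0 < ρ) (x : ℝ) (hx0 : 0 ≤ x) (hx1 : x ≤ 1) :
    ∃ ξ, Quo A r ξ ∧ |ξ - x| ≤ 3 * ρ := by
  have hL0 : 0 < L := by linarith [P.hL]
  have hn := P.hn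
  obtain ⟨t3, h3, t4, h4, h34⟩ : ∃ t3 ∈ A, ∃ t4 ∈ A, r ≤ |t3 - t4| := by
    have hne : A.Nonempty := by
      rw [Finset.nonempty_iff_ne_empty]
      rintro rfl
      have := P.hAn
      simp at this
      linarith [P.hn]
    obtain ⟨t4, h4⟩ := hne
    by_contra hcon
    push Not at hcon
    have h1 := P.frost A subset_rfl t4 r hδr (fun x hx => (hcon x hx t4 h4).le)
    have h2 : (2 * r) ^ s ≤ 2 * r ^ s := by
      rw [Real.mul_rpow (by norm_num) hr.le]
      refine mul_le_mul_of_nonneg_right ?_ (by positivity)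
      calc (2:ℝ) ^ s ≤ 2 ^ (1:ℝ) := Real.rpow_le_rpow_of_exponent_le (by norm_num) P.hs1.le
        _ = 2 := Real.rpow_one _
    have h3 : n ≤ (2 * (L ^ 2 * r ^ s)) * n := by
      calc n ≤ L * A.card := P.hAn
        _ ≤ L * (L * (2 * r ^ s) * n) := by
            refine mul_le_mul_of_nonneg_left (h1.trans ?_) hL0.le
            gcongr
        _ = _ := by ring
    have h4 : 1 ≤ 2 * (L ^ 2 * r ^ s) := by
      refine le_of_mul_le_mul_right ?_ hn
      linarith
    have h5 : 1000 ^ 4 * (L ^ 2 * r ^ s) ≤ 1 := by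
      calc 1000 ^ 4 * (L ^ 2 * r ^ s) ≤ L ^ 4 * (L ^ 2 * r ^ s) := by
            have := P.hL
            gcongr
        _ = r ^ s * L ^ 6 := by ring
        _ ≤ 1 := hrs
    linarith
  obtain ⟨m, hm⟩ := exists_pow_lt_of_lt_one hρ0 (by norm_num : (1/2:ℝ) < 1)
  have hp : (0:ℝ) < 2 ^ m := by positivity
  obtain ⟨ξ, hq, hξ⟩ := P.dyadic r ρ hr hδr hrs hρ hρ1 hρ0 t3 t4 h3 h4 h34 m ⌊x * 2 ^ m⌋₊ (by
    have : ((⌊x * 2 ^ m⌋₊ : ℕ) : ℝ) ≤ ((2 ^ m : ℕ) : ℝ) := by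
      refine (Nat.floor_le (by positivity)).trans ?_
      push_cast; nlinarith
    exact_mod_cast this)
  refine ⟨ξ, hq, ?_⟩
  have h1 := Nat.floor_le (by positivity : 0 ≤ x * 2 ^ m)
  have h2 := Nat.lt_floor_add_one (x * 2 ^ m)
  have h3 : (⌊x * 2 ^ m⌋₊ : ℝ) / 2 ^ m ≤ x := by rw [div_le_iff₀ hp]; exact h1
  have h4 : x - (1/2) ^ m ≤ (⌊x * 2 ^ m⌋₊ : ℝ) / 2 ^ m := by
    rw [le_div_iff₀ hp, sub_mul, ← mul_pow]; norm_num; linarith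
  rw [abs_le] at hξ ⊢
  constructor <;> linarith [hξ.1, hξ.2]

lemma cs_coll {α : Type*} (S : Finset α) (Φ : α → ℤ) :
    (S.card : ℝ) ^ 2 ≤ (S.image Φ).card * ((S ×ˢ S).filter (fun p => Φ p.1 = Φ p.2)).card := by
  have h1 : S.card = ∑ a ∈ S.image Φ, (S.filter (fun x => Φ x = a)).card :=
    Finset.card_eq_sum_card_image Φ S
  have h2 : ((S ×ˢ S).filter (fun p => Φ p.1 = Φ p.2)).card =
      ∑ a ∈ S.image Φ, (S.filter (fun x => Φ x = a)).card ^ 2 := by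
    rw [Finset.card_eq_sum_card_fiberwise (f := fun p => Φ p.1) (t := S.image Φ) (fun p hp => 
      Finset.mem_image_of_mem _ (Finset.mem_product.1 (Finset.mem_filter.1 hp).1).1)]
    refine Finset.sum_congr rfl fun a _ => ?_
    rw [sq, ← Finset.card_product]
    congr 1
    ext p
    simp only [Finset.mem_filter, Finset.mem_product]
    constructor
    · rintro ⟨⟨⟨h1, h2⟩, h3⟩, h4⟩
      exact ⟨⟨h1, h4⟩, h2, h3 ▸ h4⟩
    · rintro ⟨⟨h1, h2⟩, h3, h4⟩
      exact ⟨⟨⟨h1, h3⟩, h2.trans h4.symm⟩, h2⟩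
  have h3 := sq_sum_le_card_mul_sum_sq (s := S.image Φ) (f := fun a => (S.filter (fun x => Φ x = a)).card)
  rw [← h1, ← h2] at h3
  exact_mod_cast h3

noncomputable def quad (A : Finset ℝ) (ρ x : ℝ) : Finset ((ℝ × ℝ) × (ℝ × ℝ)) :=
  ((A ×ˢ A) ×ˢ (A ×ˢ A)).filter
    (fun p => |(p.1.1 - p.2.1) - x * (p.1.2 - p.2.2)| ≤ 4 * ρ)

lemma mem_quad {A : Finset ℝ} {ρ x : ℝ} {p : (ℝ × ℝ) × (ℝ × ℝ)} :
    p ∈ quad A ρ x ↔ (p.1.1 ∈ A ∧ p.1.2 ∈ A ∧ p.2.1 ∈ A ∧ p.2.2 ∈ A) ∧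
      |(p.1.1 - p.2.1) - x * (p.1.2 - p.2.2)| ≤ 4 * ρ := by
  simp only [quad, Finset.mem_filter, Finset.mem_product]
  tauto

lemma Piv.quad_lower {δ L n s : ℝ} {A : Finset ℝ} (P : Piv δ L n s A) (r ρ : ℝ)
    (hr : 0 < r) (hδr : δ ≤ ρ * r) (hρ1 : ρ ≤ 1 / 3)
    (x ξ : ℝ) (hx0 : 0 ≤ x) (hx1 : x ≤ 1) (hQ : Quo A r ξ) (hξ : |ξ - x| ≤ 3 * ρ) :
    (A.card : ℝ) ^ 4 ≤ 4 * L * n * (quad A ρ x).card := by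
  obtain ⟨t1, h1, t2, h2, t3, h3, t4, h4, hd, rfl⟩ := hQ
  have hδ := P.hδ
  have hL0 : 0 < L := by linarith [P.hL]
  have hn := P.hn
  have hd0 : 0 < |t3 - t4| := by linarith
  have hd' : t3 - t4 ≠ 0 := abs_pos.1 hd0
  have hdif : ∀ u ∈ A, ∀ v ∈ A, |u - v| ≤ 1 := by
    intro u hu v hv
    rw [abs_le]; constructor <;> linarith [(P.hA _ hu).1, (P.hA _ hv).1, (P.hA _ hu).2, (P.hA _ hv).2]
  have hI := P.hP t3 h3 t4 h4 t3 h3 t3 h3 t1 h1 t2 h2 t1 h1 t1 h1 4 (by linarith [P.hδ1])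
    (by
      have : 2 * (t3 - t4 + t3 - t3) = 2 * (t3 - t4) := by ring
      rw [this, abs_mul, abs_of_pos (by norm_num : (0:ℝ) < 2)]
      linarith [hdif t3 h3 t4 h4])
    (by
      have : 2 * (t1 - t2 + t1 - t1) = 2 * (t1 - t2) := by ring
      rw [this, abs_mul, abs_of_pos (by norm_num : (0:ℝ) < 2)]
      linarith [hdif t1 h1 t2 h2])
  set T := 2 * (t3 - t4 + t3 - t3) with hT
  set T' := 2 * (t1 - t2 + t1 - t1) with hT'
  have hTe : T = 2 * (t3 - t4) := by rw [hT]; ring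
  have hTe' : T' = 2 * (t1 - t2) := by rw [hT']; ring
  have hcs := cs_coll (A ×ˢ A) (fun p => ⌊T * p.1 / δ⌋ - ⌊T' * p.2 / δ⌋)
  have hsub : ((A ×ˢ A) ×ˢ (A ×ˢ A)).filter (fun p => (fun p : ℝ × ℝ => ⌊T * p.1 / δ⌋ - ⌊T' * p.2 / δ⌋) p.1 =
      (fun p : ℝ × ℝ => ⌊T * p.1 / δ⌋ - ⌊T' * p.2 / δ⌋) p.2) ⊆ quad A ρ x := by
    rintro ⟨⟨a, b⟩, ⟨c, d⟩⟩ hp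
    obtain ⟨hp1, hp2⟩ := Finset.mem_filter.1 hp
    simp only [Finset.mem_product] at hp1 hp2
    rw [mem_quad]
    refine ⟨by tauto, ?_⟩
    have h5 := floor_coll δ T T' _ _ _ _ hδ hp2
    simp only
    set ξ := (t1 - t2) / (t3 - t4) with hξd
    have h6 : T * (a - c) - T' * (b - d) = T * ((a - c) - ξ * (b - d)) := by
      rw [hTe, hTe', hξd]; field_simp
    rw [h6, abs_mul, hTe, abs_mul, abs_of_pos (by norm_num : (0:ℝ) < 2)] at h5
    have h7 : |(a - c) - ξ * (b - d)| ≤ ρ := by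
      by_contra hcon
      push Not at hcon
      have hρ0 : 0 < ρ := by
        by_contra hh; push Not at hh; nlinarith
      nlinarith [mul_le_mul hd hcon.le hρ0.le hd0.le]
    have h8 : (a - c) - x * (b - d) = ((a - c) - ξ * (b - d)) + (ξ - x) * (b - d) := by ring
    rw [h8]
    refine (abs_add_le _ _).trans ?_
    rw [abs_mul]
    have h9 := hdif b hp1.1.2 d hp1.2.2
    have : |ξ - x| * |b - d| ≤ |ξ - x| * 1 := mul_le_mul_of_nonneg_left h9 (abs_nonneg _)
    linarith
  have h4s : (4:ℝ) ^ s ≤ 4 := by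
    calc (4:ℝ) ^ s ≤ 4 ^ (1:ℝ) := Real.rpow_le_rpow_of_exponent_le (by norm_num) P.hs1.le
      _ = 4 := Real.rpow_one _
  have hcard : ((A ×ˢ A).card : ℝ) = (A.card : ℝ) ^ 2 := by
    rw [Finset.card_product]; push_cast; ring
  rw [hcard] at hcs
  calc (A.card : ℝ) ^ 4 = ((A.card : ℝ) ^ 2) ^ 2 := by ring
    _ ≤ _ := hcs
    _ ≤ (L * 4 ^ s * n) * (quad A ρ x).card := by
        refine mul_le_mul hI ?_ (Nat.cast_nonneg _) (by positivity)
        exact Nat.cast_le.2 (Finset.card_le_card hsub)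
    _ ≤ (L * 4 * n) * (quad A ρ x).card := by gcongr
    _ = _ := by ring

lemma Piv.quad_close {δ L n s : ℝ} {A : Finset ℝ} (P : Piv δ L n s A) (ρ θ x : ℝ)
    (hθ : δ ≤ 2 * θ) (hρ : δ ≤ 2 * (4 * ρ)) :
    (((quad A ρ x).filter (fun p => |p.1.2 - p.2.2| < θ)).card : ℝ) ≤
      (A.card : ℝ) ^ 2 * (L * (2 * θ) ^ s * n) * (L * (2 * (4 * ρ)) ^ s * n) := by
  have hL0 : 0 < L := by linarith [P.hL]
  have hn := P.hn
  have hδ := P.hδ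
  have hθ0 : 0 < θ := by linarith
  have hρ0 : 0 < ρ := by linarith
  set F := (quad A ρ x).filter (fun p => |p.1.2 - p.2.2| < θ) with hF
  have hm : ∀ p ∈ F, (p.1.1 ∈ A ∧ p.1.2 ∈ A ∧ p.2.1 ∈ A ∧ p.2.2 ∈ A) ∧
      |(p.1.1 - p.2.1) - x * (p.1.2 - p.2.2)| ≤ 4 * ρ ∧ |p.1.2 - p.2.2| < θ := by
    intro p hp
    obtain ⟨h1, h2⟩ := Finset.mem_filter.1 hp
    rw [mem_quad] at h1
    exact ⟨h1.1, h1.2, h2⟩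
  have h1 : (F.card : ℝ) ≤ ((L * (2 * (4 * ρ)) ^ s * n) * (L * (2 * θ) ^ s * n)) * (F.image Prod.snd).card := by
    refine card_le_real _ _ _ ?_
    intro a ha
    set H := F.filter (fun p => p.2 = a) with hH
    have hHm : ∀ p ∈ H, p ∈ F ∧ p.2 = a := fun p hp => Finset.mem_filter.1 hp
    have h2 : (H.card : ℝ) ≤ (L * (2 * (4 * ρ)) ^ s * n) * (H.image (fun p => p.1.2)).card := by
      refine card_le_real _ _ _ ?_
      intro y hy
      set K := H.filter (fun p => p.1.2 = y) with hK
      have hKm : ∀ p ∈ K, p ∈ F ∧ p.2 = a ∧ p.1.2 = y := fun p hp =>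
        ⟨(hHm p (Finset.mem_filter.1 hp).1).1, (hHm p (Finset.mem_filter.1 hp).1).2, (Finset.mem_filter.1 hp).2⟩
      have hinj : (K.image (fun p => p.1.1)).card = K.card := by
        refine Finset.card_image_of_injOn ?_
        rintro ⟨⟨a1, b1⟩, c1⟩ hp ⟨⟨a2, b2⟩, c2⟩ hp' h
        have h1 := hKm _ hp
        have h2 := hKm _ hp'
        simp only at h h1 h2
        rw [h, h1.2.1, h1.2.2, h2.2.1, h2.2.2]
      rw [← hinj]
      refine P.frost _ ?_ (a.1 + x * (y - a.2)) (4 * ρ) hρ ?_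
      · intro z hz
        obtain ⟨p, hp, rfl⟩ := Finset.mem_image.1 hz
        exact (hm p (hKm p hp).1).1.1
      · intro z hz
        obtain ⟨p, hp, rfl⟩ := Finset.mem_image.1 hz
        obtain ⟨q1, q2, q3⟩ := hKm p hp
        have := (hm p q1).2.1
        rw [q2, q3] at this
        convert this using 2
        ring
    refine h2.trans (mul_le_mul_of_nonneg_left ?_ (by positivity))
    refine P.frost _ ?_ a.2 θ hθ ?_
    · intro z hz
      obtain ⟨p, hp, rfl⟩ := Finset.mem_image.1 hz
      exact (hm p (hHm p hp).1).1.2.1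
    · intro z hz
      obtain ⟨p, hp, rfl⟩ := Finset.mem_image.1 hz
      obtain ⟨q1, q2⟩ := hHm p hp
      have := (hm p q1).2.2
      rw [q2] at this
      exact this.le
  have h3 : ((F.image Prod.snd).card : ℝ) ≤ (A.card : ℝ) ^ 2 := by
    have : F.image Prod.snd ⊆ A ×ˢ A := by
      intro z hz
      obtain ⟨p, hp, rfl⟩ := Finset.mem_image.1 hz
      exact Finset.mem_product.2 (hm p hp).1.2.2
    have h4 := Finset.card_le_card this
    rw [Finset.card_product] at h4
    rw [sq]
    exact_mod_cast h4
  refine h1.trans ?_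
  calc _ ≤ ((L * (2 * (4 * ρ)) ^ s * n) * (L * (2 * θ) ^ s * n)) * (A.card : ℝ) ^ 2 :=
        mul_le_mul_of_nonneg_left h3 (by positivity)
    _ = _ := by ring

lemma card_near (m : ℕ) (c D : ℝ) (hD : 0 ≤ D) :
    (((Finset.range m).filter (fun k : ℕ => |(k : ℝ) - c| ≤ D)).card : ℝ) ≤ 2 * D + 1 := by
  have h1 : ((Finset.range m).filter (fun k : ℕ => |(k : ℝ) - c| ≤ D)).image (fun k : ℕ => (k : ℤ)) ⊆
      Finset.Icc ⌈c - D⌉ ⌊c + D⌋ := by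
    intro z hz
    obtain ⟨k, hk, rfl⟩ := Finset.mem_image.1 hz
    have := abs_le.1 (Finset.mem_filter.1 hk).2
    rw [Finset.mem_Icc, Int.ceil_le, Int.le_floor]
    push_cast
    constructor <;> linarith [this.1, this.2]
  have h2 := Finset.card_le_card h1
  rw [Finset.card_image_of_injective _ Nat.cast_injective, Int.card_Icc] at h2
  have h3 : ((⌊c + D⌋ + 1 - ⌈c - D⌉).toNat : ℝ) ≤ 2 * D + 1 := by
    have : (((⌊c + D⌋ + 1 - ⌈c - D⌉).toNat : ℤ) : ℝ) = ((max (⌊c + D⌋ + 1 - ⌈c - D⌉) 0 : ℤ) : ℝ) := by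
      rw [Int.toNat_eq_max]
    rw [Int.cast_natCast] at this
    rw [this]
    push_cast
    refine max_le ?_ (by linarith)
    linarith [Int.floor_le (c + D), Int.le_ceil (c - D)]
  exact le_trans (by exact_mod_cast h2) h3

lemma Piv.quad_sum {δ L n s : ℝ} {A : Finset ℝ} (P : Piv δ L n s A) (ρ θ : ℝ) (m : ℕ)
    (hθ : δ ≤ 2 * θ) (hθ1 : θ ≤ 1) (hρ : δ ≤ 2 * (4 * ρ)) :
    ∑ k ∈ Finset.range m, ((quad A ρ (k * ρ)).card : ℝ) ≤
      m * ((A.card : ℝ) ^ 2 * (L * (2 * θ) ^ s * n) * (L * (2 * (4 * ρ)) ^ s * n)) +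
      9 / θ * (A.card : ℝ) ^ 4 := by
  have hδ := P.hδ
  have hθ0 : 0 < θ := by linarith
  have hρ0 : 0 < ρ := by linarith
  have h1 : ∀ k ∈ Finset.range m, ((quad A ρ (k * ρ)).card : ℝ) ≤
      ((A.card : ℝ) ^ 2 * (L * (2 * θ) ^ s * n) * (L * (2 * (4 * ρ)) ^ s * n)) +
      ((quad A ρ (k * ρ)).filter (fun p => ¬ |p.1.2 - p.2.2| < θ)).card := by
    intro k _
    have h2 := P.quad_close ρ θ (k * ρ) hθ hρ
    have h3 := Finset.card_filter_add_card_filter_not (s := quad A ρ (k * ρ)) (fun p => |p.1.2 - p.2.2| < θ)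
    have h4 : (((quad A ρ (k * ρ)).filter (fun p => |p.1.2 - p.2.2| < θ)).card : ℝ) +
      ((quad A ρ (k * ρ)).filter (fun p => ¬ |p.1.2 - p.2.2| < θ)).card = (quad A ρ (k * ρ)).card := by
      exact_mod_cast h3
    linarith
  refine (Finset.sum_le_sum h1).trans ?_
  rw [Finset.sum_add_distrib]
  simp only [Finset.sum_const, Finset.card_range, nsmul_eq_mul]
  refine add_le_add le_rfl ?_
  set Qd := (A ×ˢ A) ×ˢ (A ×ˢ A) with hQd
  set F := Qd.filter (fun p => ¬ |p.1.2 - p.2.2| < θ) with hF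
  have h2 : ∑ k ∈ Finset.range m, ((quad A ρ (k * ρ)).filter (fun p => ¬ |p.1.2 - p.2.2| < θ)).card =
      ∑ k ∈ Finset.range m, (Finset.bipartiteAbove (fun (k : ℕ) (p : (ℝ × ℝ) × (ℝ × ℝ)) =>
        |(p.1.1 - p.2.1) - (k * ρ) * (p.1.2 - p.2.2)| ≤ 4 * ρ) F k).card := by
    refine Finset.sum_congr rfl fun k _ => ?_
    congr 1
    simp only [quad, Finset.bipartiteAbove, hF, Finset.filter_filter]
    congr 1
    ext p
    tauto
  rw [Finset.sum_card_bipartiteAbove_eq_sum_card_bipartiteBelow] at h2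
  have h3 : ∀ p ∈ F, ((Finset.bipartiteBelow (fun (k : ℕ) (p : (ℝ × ℝ) × (ℝ × ℝ)) =>
        |(p.1.1 - p.2.1) - (k * ρ) * (p.1.2 - p.2.2)| ≤ 4 * ρ) (Finset.range m) p).card : ℝ) ≤ 9 / θ := by
    intro p hp
    have hp2 := (Finset.mem_filter.1 hp).2
    push Not at hp2
    have hd0 : 0 < |p.1.2 - p.2.2| := by linarith
    have hd := abs_pos.1 hd0
    have h4 := card_near m ((p.1.1 - p.2.1) / (ρ * (p.1.2 - p.2.2))) (4 / θ) (by positivity)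
    have h5 : Finset.bipartiteBelow (fun (k : ℕ) (p : (ℝ × ℝ) × (ℝ × ℝ)) =>
        |(p.1.1 - p.2.1) - (k * ρ) * (p.1.2 - p.2.2)| ≤ 4 * ρ) (Finset.range m) p ⊆
        (Finset.range m).filter (fun k : ℕ => |(k : ℝ) - (p.1.1 - p.2.1) / (ρ * (p.1.2 - p.2.2))| ≤ 4 / θ) := by
      intro k hk
      obtain ⟨hk1, hk2⟩ := Finset.mem_filter.1 hk
      refine Finset.mem_filter.2 ⟨hk1, ?_⟩
      have e1 : (k : ℝ) - (p.1.1 - p.2.1) / (ρ * (p.1.2 - p.2.2)) =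
        - (((p.1.1 - p.2.1) - (k * ρ) * (p.1.2 - p.2.2)) / (ρ * (p.1.2 - p.2.2))) := by
        field_simp; ring
      rw [e1, abs_neg, abs_div, abs_mul, abs_of_pos hρ0, div_le_div_iff₀ (by positivity) hθ0]
      calc _ ≤ 4 * ρ * θ := mul_le_mul_of_nonneg_right hk2 hθ0.le
        _ ≤ 4 * ρ * |p.1.2 - p.2.2| := mul_le_mul_of_nonneg_left hp2 (by positivity)
        _ = _ := by ring
    have h6 : 1 ≤ 1 / θ := by rw [le_div_iff₀ hθ0]; linarith
    calc _ ≤ _ := (Nat.cast_le (α := ℝ)).2 (Finset.card_le_card h5)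
      _ ≤ _ := h4
      _ ≤ 2 * (4 / θ) + 1 / θ := by linarith
      _ = 9 / θ := by ring
  have h2' := congrArg (Nat.cast : ℕ → ℝ) h2
  push_cast at h2'
  rw [h2']
  refine (Finset.sum_le_sum h3).trans ?_
  rw [Finset.sum_const, nsmul_eq_mul, mul_comm]
  refine mul_le_mul_of_nonneg_left ?_ (by positivity)
  have h7 : F.card ≤ Qd.card := Finset.card_filter_le _ _
  rw [hQd, Finset.card_product, Finset.card_product] at h7
  have h8 : (A.card : ℝ) ^ 4 = ((A.card * A.card * (A.card * A.card) : ℕ) : ℝ) := by push_cast; ring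
  rw [h8]
  exact_mod_cast h7

lemma arith_piv (L n s c m ρ θ h H : ℝ) (hL : 1000 ≤ L) (hn : 0 < n) (hs0 : 0 < s) (hs1 : s < 1)
    (hρ : 0 < ρ) (hθ : 0 < θ) (hm : 1 ≤ m * ρ) (hm0 : 0 < m) (hc : 0 < c) (hAn : n ≤ L * c)
    (hE : (θ * ρ) ^ s * n ≤ 2 * H) (hh : n * (ρ / θ) ≤ 2 * h) (hHL : H * L ^ 6 ≤ 1) (hhL : h * L ^ 2 ≤ 1)
    (hmain : m * c ^ 4 ≤ 4 * L * n * (m * (c ^ 2 * (L * (2 * θ) ^ s * n) * (L * (2 * (4 * ρ)) ^ s * n)) +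
      9 / θ * c ^ 4)) : False := by
  have hL0 : 0 < L := by linarith
  have e1 : (2 * θ) ^ s * (2 * (4 * ρ)) ^ s ≤ 16 * (θ * ρ) ^ s := by
    rw [← Real.mul_rpow (by positivity) (by positivity)]
    have : 2 * θ * (2 * (4 * ρ)) = 16 * (θ * ρ) := by ring
    rw [this, Real.mul_rpow (by norm_num) (by positivity)]
    refine mul_le_mul_of_nonneg_right ?_ (by positivity)
    calc (16:ℝ) ^ s ≤ 16 ^ (1:ℝ) := Real.rpow_le_rpow_of_exponent_le (by norm_num) hs1.le
      _ = 16 := Real.rpow_one _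
  have h1 : m * c ^ 4 ≤ m * (c ^ 4 * (128 * (L ^ 5 * H) + 72 * (L * h))) := by
    calc m * c ^ 4 ≤ _ := hmain
      _ = 4 * L ^ 3 * m * c ^ 2 * n * n ^ 2 * ((2 * θ) ^ s * (2 * (4 * ρ)) ^ s) + 36 * L * n / θ * c ^ 4 * 1 := by ring
      _ ≤ 4 * L ^ 3 * m * c ^ 2 * n * (L * c) ^ 2 * (16 * (θ * ρ) ^ s) + 36 * L * n / θ * c ^ 4 * (m * ρ) := by
          gcongr
      _ = m * c ^ 4 * (64 * L ^ 5 * ((θ * ρ) ^ s * n) + 36 * L * (n * (ρ / θ))) := by ring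
      _ ≤ m * c ^ 4 * (64 * L ^ 5 * (2 * H) + 36 * L * (2 * h)) := by gcongr
      _ = _ := by ring
  have h2 := le_of_mul_le_mul_left h1 hm0
  have h3 : 1 ≤ 128 * (L ^ 5 * H) + 72 * (L * h) := by
    refine le_of_mul_le_mul_left ?_ (by positivity : 0 < c ^ 4)
    linarith
  have hH0 : 0 < H := by
    have : 0 < (θ * ρ) ^ s * n := by positivity
    linarith
  have hh0 : 0 < h := by
    have : 0 < n * (ρ / θ) := by positivity
    linarith
  have h4 : L * (L ^ 5 * H) ≤ 1 := by
    calc _ = H * L ^ 6 := by ring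
      _ ≤ 1 := hHL
  have h5 : L * (L * h) ≤ 1 := by
    calc _ = h * L ^ 2 := by ring
      _ ≤ 1 := hhL
  have h6 : 0 < L ^ 5 * H := by positivity
  have h7 : 0 < L * h := by positivity
  nlinarith

lemma Piv.absurd {δ L n s : ℝ} {A : Finset ℝ} (P : Piv δ L n s A) (q : ℕ) (hq : 1 ≤ q * s)
    (hh : δ ^ ((1 - s) / 4) * L ^ (13 * q) ≤ 1) : False := by
  have hδ := P.hδ
  have hδ1 := P.hδ1
  have hs0 := P.hs0
  have hs1 := P.hs1
  have hL := P.hL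
  have hL0 : 0 < L := by linarith
  have hn := P.hn
  have hq1 : 1 ≤ q := by
    rcases Nat.eq_zero_or_pos q with h0 | h0
    · rw [h0] at hq; norm_num at hq
    · exact h0
  set c := (1 - s) / 4 with hc
  have hc0 : 0 < c := by rw [hc]; linarith
  have hc1 : c < 1 / 4 := by rw [hc]; linarith
  set h := δ ^ c with hhdef
  have hh0 : 0 < h := by positivity
  set r := (L ^ (6 * q))⁻¹ with hr
  have hr0 : 0 < r := by positivity
  have hr1 : r ≤ 1 := inv_le_one_of_one_le₀ (one_le_pow₀ (by linarith))
  have hhr : h ≤ r ^ 2 / L := by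
    have e : r ^ 2 / L = (L ^ (12 * q + 1))⁻¹ := by
      rw [hr, pow_succ L, show 12 * q = 6 * q * 2 by ring, pow_mul L (6 * q) 2]
      field_simp
    rw [e, ← one_div, le_div_iff₀ (by positivity)]
    refine le_trans ?_ hh
    refine mul_le_mul_of_nonneg_left ?_ hh0.le
    exact pow_le_pow_right₀ (by linarith) (by omega)
  have hhr2 : h ≤ r ^ 2 := hhr.trans (div_le_self (by positivity) (by linarith))
  have hhr1 : h ≤ r := hhr2.trans (by nlinarith)
  have hh3 : h ≤ 1 / 1000 := by
    refine hhr.trans ?_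
    rw [div_le_div_iff₀ hL0 (by norm_num)]
    nlinarith
  have hrL : r ^ s * L ^ 6 ≤ 1 := by
    have e : L ^ 6 ≤ (L ^ (6 * q)) ^ s := by
      rw [pow_mul, ← Real.rpow_natCast (L ^ 6) q, ← Real.rpow_mul (by positivity)]
      calc L ^ 6 = (L ^ 6) ^ (1:ℝ) := (Real.rpow_one _).symm
        _ ≤ _ := Real.rpow_le_rpow_of_exponent_le (one_le_pow₀ (by linarith)) hq
    rw [hr, Real.inv_rpow (by positivity), inv_mul_le_iff₀ (by positivity), mul_one]
    exact e
  set ρ := δ ^ (1 - c) with hρ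
  set θ := δ ^ (2 * c) with hθ
  have hρ0 : 0 < ρ := by positivity
  have hθ0 : 0 < θ := by positivity
  have hρh : ρ * h = δ := by
    rw [hρ, hhdef, ← Real.rpow_add hδ]; simp
  have hρle : ρ ≤ h := Real.rpow_le_rpow_of_exponent_ge hδ hδ1 (by linarith)
  have hδρ : δ ≤ ρ := by nlinarith
  have hδh : δ ≤ h := hδρ.trans hρle
  have hδθ : δ ≤ θ := by
    calc δ = δ ^ (1:ℝ) := (Real.rpow_one _).symm
      _ ≤ _ := Real.rpow_le_rpow_of_exponent_ge hδ hδ1 (by linarith)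
  have hθ1 : θ ≤ 1 := Real.rpow_le_one hδ.le hδ1 (by linarith)
  have hcard : (0:ℝ) < A.card := by
    by_contra hcon
    push Not at hcon
    nlinarith [P.hAn]
  have hθρ : θ * ρ = δ * h := by
    rw [hθ, hρ, hhdef, ← Real.rpow_add hδ]
    nth_rewrite 2 [← Real.rpow_one δ]
    rw [← Real.rpow_add hδ]
    congr 1; ring
  have hρθ : ρ / θ = δ ^ s * h := by
    rw [hθ, hρ, hhdef, ← Real.rpow_sub hδ, ← Real.rpow_add hδ]
    congr 1
    rw [hc]; ring
  refine arith_piv L n s A.card (⌊1 / ρ⌋₊ + 1 : ℕ) ρ θ h (h ^ s) hL hn hs0 hs1 hρ0 hθ0 ?_ ?_ hcard P.hAn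
    ?_ ?_ ?_ ?_ ?_
  · have h1 := Nat.lt_floor_add_one (1 / ρ)
    push_cast
    rw [div_lt_iff₀ hρ0] at h1
    exact h1.le
  · exact_mod_cast Nat.succ_pos _
  · rw [hθρ, Real.mul_rpow hδ.le hh0.le]
    have := mul_le_mul_of_nonneg_right P.hnd (by positivity : 0 ≤ h ^ s)
    linarith
  · rw [hρθ]
    have := mul_le_mul_of_nonneg_right P.hnd hh0.le
    linarith
  · refine le_trans ?_ hrL
    refine mul_le_mul_of_nonneg_right ?_ (by positivity)
    exact Real.rpow_le_rpow hh0.le hhr1 hs0.le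
  · refine le_trans ?_ hh
    refine mul_le_mul_of_nonneg_left ?_ hh0.le
    exact pow_le_pow_right₀ (by linarith) (by omega)
  · have hsum := P.quad_sum ρ θ (⌊1 / ρ⌋₊ + 1) (by linarith) hθ1 (by linarith)
    refine le_trans ?_ (mul_le_mul_of_nonneg_left hsum (by positivity))
    rw [Finset.mul_sum]
    calc _ = ∑ k ∈ Finset.range (⌊1 / ρ⌋₊ + 1), (A.card : ℝ) ^ 4 := by
          rw [Finset.sum_const, Finset.card_range, nsmul_eq_mul]
      _ ≤ _ := by
        refine Finset.sum_le_sum fun k hk => ?_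
        have hk1 : k ≤ ⌊1 / ρ⌋₊ := Nat.lt_succ_iff.1 (Finset.mem_range.1 hk)
        have hk2 : (k:ℝ) ≤ 1 / ρ := (Nat.le_floor_iff (by positivity)).1 hk1
        rw [le_div_iff₀ hρ0] at hk2
        obtain ⟨ξ, hq, hξ⟩ := P.dense r ρ hr0 (by linarith) hrL
          (by rw [← hρh]; gcongr) (by linarith) hρ0 (k * ρ) (by positivity) hk2
        exact P.quad_lower r ρ hr0 (by rw [← hρh]; gcongr) (by linarith) _ ξ (by positivity) hk2 hq hξ

lemma core (δ L n s : ℝ) (hδ : 0 < δ) (hδ1 : δ ≤ 1) (hs0 : 0 < s) (hs1 : s < 1) (hL : 1000 ≤ L)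
    (A : Finset ℝ) (hA : ∀ x ∈ A, 1 / L ≤ x ∧ x ≤ 1)
    (hsep : ∀ x ∈ A, ∀ y ∈ A, x ≠ y → δ ≤ |x - y|)
    (hn : 0 < n) (hAn : n ≤ L * A.card) (hAn' : (A.card : ℝ) ≤ n) (hnd : n * δ ^ s ≤ 2)
    (hF : ∀ x l : ℝ, δ ≤ l →
      ((A.filter (fun t => t ∈ Set.Icc x (x + l))).card : ℝ) ≤ L * l ^ s * n)
    (hN : (((A ×ˢ A).image (fun p => ⌊p.1 / δ⌋ - ⌊p.2 / δ⌋)).card : ℝ) ≤ L * n)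
    (hM : (((A ×ˢ A).image (fun p => ⌊p.1 ^ 2 / δ⌋ - ⌊p.2 ^ 2 / δ⌋)).card : ℝ) ≤ L * n)
    (q : ℕ) (hq : 1 ≤ q * s)
    (hh : δ ^ ((1 - s) / 4) * (L ^ (32 * q + 240)) ^ (13 * q) ≤ 1) : False := by
  have hL0 : 0 < L := by linarith
  have hL1 : 1 ≤ L := by linarith
  have hq1 : 1 ≤ q := by
    rcases Nat.eq_zero_or_pos q with h0 | h0
    · rw [h0] at hq; norm_num at hq
    · exact h0
  have hcard : (0:ℝ) < A.card := by
    by_contra hcon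
    push Not at hcon
    nlinarith
  have hne : A.Nonempty := by
    rw [← Finset.card_pos]; exact_mod_cast hcard
  set r0 := (L ^ (4 * q))⁻¹ with hr
  have hr0 : 0 < r0 := by positivity
  have hr1 : r0 ≤ 1 := inv_le_one_of_one_le₀ (one_le_pow₀ hL1)
  have hδr : δ ≤ r0 := by
    have h1 : δ ≤ δ ^ ((1 - s) / 4) := by
      calc δ = δ ^ (1:ℝ) := (Real.rpow_one _).symm
        _ ≤ _ := Real.rpow_le_rpow_of_exponent_ge hδ hδ1 (by linarith)
    refine h1.trans ?_
    rw [hr, ← one_div, le_div_iff₀ (by positivity)]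
    refine le_trans ?_ hh
    refine mul_le_mul_of_nonneg_left ?_ (by positivity)
    rw [← pow_mul]
    exact pow_le_pow_right₀ hL1 (by nlinarith)
  have hrL : r0 ^ s * L ^ 4 ≤ 1 := by
    have e : L ^ 4 ≤ (L ^ (4 * q)) ^ s := by
      rw [pow_mul, ← Real.rpow_natCast (L ^ 4) q, ← Real.rpow_mul (by positivity)]
      calc L ^ 4 = (L ^ 4) ^ (1:ℝ) := (Real.rpow_one _).symm
        _ ≤ _ := Real.rpow_le_rpow_of_exponent_le (one_le_pow₀ hL1) hq
    rw [hr, Real.inv_rpow (by positivity), inv_mul_le_iff₀ (by positivity), mul_one]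
    exact e
  have hrs0 : 0 < r0 ^ s := by positivity
  have hclose : ∀ y, ((A.filter (fun x => |x - y| < r0)).card : ℝ) * 4 ≤ A.card := by
    intro y
    have h1 : ((A.filter (fun x => |x - y| < r0)).card : ℝ) ≤ L * (2 * r0) ^ s * n := by
      refine le_trans ?_ (hF (y - r0) (2 * r0) (by linarith))
      refine Nat.cast_le.2 (Finset.card_le_card ?_)
      intro x hx
      obtain ⟨h1, h2⟩ := Finset.mem_filter.1 hx
      have := abs_lt.1 h2
      exact Finset.mem_filter.2 ⟨h1, by linarith [this.1], by linarith [this.2]⟩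
    have h2 : (2 * r0) ^ s ≤ 2 * r0 ^ s := by
      rw [Real.mul_rpow (by norm_num) hr0.le]
      refine mul_le_mul_of_nonneg_right ?_ (by positivity)
      calc (2:ℝ) ^ s ≤ 2 ^ (1:ℝ) := Real.rpow_le_rpow_of_exponent_le (by norm_num) hs1.le
        _ = 2 := Real.rpow_one _
    have h3 : 8 * (L ^ 2 * r0 ^ s) ≤ 1 := by
      calc 8 * (L ^ 2 * r0 ^ s) ≤ L ^ 2 * (L ^ 2 * r0 ^ s) := by gcongr; nlinarith
        _ = r0 ^ s * L ^ 4 := by ring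
        _ ≤ 1 := hrL
    calc ((A.filter (fun x => |x - y| < r0)).card : ℝ) * 4 ≤ (L * (2 * r0 ^ s) * (L * A.card)) * 4 := by
          refine mul_le_mul_of_nonneg_right (h1.trans ?_) (by norm_num)
          gcongr
      _ = 8 * (L ^ 2 * r0 ^ s) * A.card := by ring
      _ ≤ 1 * A.card := by gcongr
      _ = _ := one_mul _
  obtain ⟨A1, hA1, hA1c, y0, hy0, hA1p⟩ := step3a δ L n r0 hL1 A hne hn hAn hclose hN
  have hT : ∀ t ∈ {t : ℝ | ∃ x ∈ A1, t = x - y0}, ((A.image (fun x => ⌊2 * t * x / δ⌋) +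
      A.image (fun x => ⌊x ^ 2 / δ⌋)).card : ℝ) ≤ L ^ 16 / r0 * n := by
    rintro t ⟨x, hx, rfl⟩
    exact step3b δ L n r0 hδ hδ1 hL A hne hA hsep hn hAn hAn' hr0 hr1 hN hM x y0 (hA1 hx) hy0
      (hA1p x hx).1 (hA1p x hx).2
  have h4 : ∀ t1 ∈ A1, ∀ t2 ∈ A1, ∀ t3 ∈ A1, ∀ t4 ∈ A1,
      ((A.image (fun x => ⌊2 * (t1 - t2 + t3 - t4) * x / δ⌋) +
      A.image (fun x => ⌊x ^ 2 / δ⌋)).card : ℝ) ≤ L ^ 116 / r0 ^ 4 *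
        (A.image (fun x => ⌊x ^ 2 / δ⌋)).card := by
    intro t1 h1 t2 h2 t3 h3 t4 h4
    have := step4 δ L n r0 hδ hL A hne hA hsep hn hAn hAn' hr0 hM _ hT (t1 - y0) (t2 - y0)
      (t3 - y0) (t4 - y0) ⟨t1, h1, rfl⟩ ⟨t2, h2, rfl⟩ ⟨t3, h3, rfl⟩ ⟨t4, h4, rfl⟩
    have e : t1 - y0 - (t2 - y0) + (t3 - y0) - (t4 - y0) = t1 - t2 + t3 - t4 := by ring
    rw [e] at this
    exact this
  have hLL : L ^ 3 ≤ L ^ (32 * q + 240) := pow_le_pow_right₀ hL1 (by omega)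
  have hL3 : 2 * L ≤ L ^ 3 := by nlinarith [sq_nonneg L]
  have hL' : L ≤ L ^ (32 * q + 240) := by linarith
  have P : Piv δ (L ^ (32 * q + 240)) n s A1 := by
    refine ⟨hδ, hδ1, hs0, hs1, by linarith, ?_, hn, ?_, ?_, hnd, ?_, ?_⟩
    · intro x hx
      have := hA x (hA1 hx)
      exact ⟨le_trans (by positivity) this.1, this.2⟩
    · calc n ≤ L * A.card := hAn
        _ ≤ L * (2 * A1.card) := by gcongr
        _ = (2 * L) * A1.card := by ring
        _ ≤ L ^ (32 * q + 240) * A1.card := by gcongr; linarith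
    · exact le_trans (by exact_mod_cast Finset.card_le_card hA1) hAn'
    · intro x l hl
      have hl0 : 0 < l := by linarith
      calc _ ≤ ((A.filter (fun t => t ∈ Set.Icc x (x + l))).card : ℝ) :=
            Nat.cast_le.2 (Finset.card_le_card (Finset.filter_subset_filter _ hA1))
        _ ≤ _ := hF x l hl
        _ ≤ _ := by gcongr
    · intro t1 h1 t2 h2 t3 h3 t4 h4' u1 g1 u2 g2 u3 g3 u4 g4 R hR hw hw'
      have hR0 : 0 < R := by linarith
      have h5 := step5 δ L n s hδ hs0 hs1 hL1 A hne hA hn hF (L ^ 116 / r0 ^ 4) _ _ R hR hw hw'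
        (h4 t1 h1 t2 h2 t3 h3 t4 h4') (h4 u1 g1 u2 g2 u3 g3 u4 g4)
      have h6 : (((A1 ×ˢ A1).image (fun p => ⌊2 * (t1 - t2 + t3 - t4) * p.1 / δ⌋ -
        ⌊2 * (u1 - u2 + u3 - u4) * p.2 / δ⌋)).card : ℝ) ≤
        ((A ×ˢ A).image (fun p => ⌊2 * (t1 - t2 + t3 - t4) * p.1 / δ⌋ -
        ⌊2 * (u1 - u2 + u3 - u4) * p.2 / δ⌋)).card :=
        Nat.cast_le.2 (Finset.card_le_card (Finset.image_subset_image (Finset.product_subset_product hA1 hA1)))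
      refine (h6.trans h5).trans ?_
      have e : L ^ 116 / r0 ^ 4 = L ^ (16 * q + 116) := by
        rw [hr, inv_pow, div_inv_eq_mul, ← pow_mul, ← pow_add]
        congr 1; ring
      rw [e]
      calc 36 * (L ^ (16 * q + 116)) ^ 2 * (L ^ 2 * R ^ s * n)
          = 36 * (L ^ (32 * q + 234) * (R ^ s * n)) := by
            rw [show 32 * q + 234 = (16 * q + 116) * 2 + 2 by ring, pow_add, pow_mul]; ring
        _ ≤ L ^ 6 * (L ^ (32 * q + 234) * (R ^ s * n)) := by
            gcongr
            calc (36:ℝ) ≤ 1000 ^ 6 := by norm_num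
              _ ≤ L ^ 6 := by gcongr
        _ = _ := by
            rw [show 32 * q + 240 = 6 + (32 * q + 234) by ring, pow_add L 6]; ring
  exact P.absurd q hq hh

lemma sumimg (δ : ℝ) (hδ : 0 < δ) (G : Finset (ℝ × ℝ)) (u v : ℝ → ℝ) :
    ((G.image (fun p => ⌊u p.1 / δ⌋ + ⌊v p.2 / δ⌋)).card : ℝ) ≤
      10 * (coverNum δ ((fun p : ℝ × ℝ => u p.1 + v p.2) '' (↑G : Set (ℝ × ℝ))) : ℝ) := by
  have h1 := transfer G (fun p => ⌊(u p.1 + v p.2) / δ⌋) (fun p => ⌊u p.1 / δ⌋ + ⌊v p.2 / δ⌋) 2 (by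
    rintro ⟨a, b⟩ _ ⟨c, d⟩ _ h
    refine int_abs_le _ _ ?_
    simp only at h ⊢
    have h0 : (⌊(u a + v b) / δ⌋ : ℝ) = ⌊(u c + v d) / δ⌋ := by exact_mod_cast h
    have h2 := Int.floor_le ((u a + v b) / δ)
    have h3 := Int.lt_floor_add_one ((u a + v b) / δ)
    have h4 := Int.floor_le ((u c + v d) / δ)
    have h5 := Int.lt_floor_add_one ((u c + v d) / δ)
    have ea : (u a + v b) / δ = u a / δ + v b / δ := add_div _ _ _
    have ec : (u c + v d) / δ = u c / δ + v d / δ := add_div _ _ _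
    push_cast
    rw [abs_lt]
    constructor <;> linarith [Int.floor_le (u a / δ), Int.lt_floor_add_one (u a / δ),
      Int.floor_le (v b / δ), Int.lt_floor_add_one (v b / δ), Int.floor_le (u c / δ),
      Int.lt_floor_add_one (u c / δ), Int.floor_le (v d / δ), Int.lt_floor_add_one (v d / δ)])
  have h2 := cells δ hδ G (fun p : ℝ × ℝ => u p.1 + v p.2)
  have h3 : (G.image (fun p => ⌊u p.1 / δ⌋ + ⌊v p.2 / δ⌋)).card ≤
    10 * coverNum δ ((fun p : ℝ × ℝ => u p.1 + v p.2) '' (↑G : Set (ℝ × ℝ))) := by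
    omega
  exact_mod_cast h3

lemma arith_bsg (l n b D S f : ℝ) (j : ℕ) (hl : 10000 ≤ l) (hn : 0 < n) (hb : n ≤ 2 * b)
    (hD : 0 ≤ D) (hS0 : 0 ≤ S)
    (hS : S ≤ 10 * (l * n)) (hf0 : 0 ≤ f) (hf : f ≤ l ^ j)
    (h : D * (b ^ 3 / (1024 * (l ^ 2) ^ 5)) ≤ f ^ 3 * S ^ 4) : D ≤ l ^ (3 * j + 16) * n := by
  have hl0 : 0 < l := by linarith
  have h1 : D * (n ^ 3 / (8192 * l ^ 10)) ≤ (l ^ j) ^ 3 * (10 * (l * n)) ^ 4 := by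
    calc D * (n ^ 3 / (8192 * l ^ 10)) ≤ D * ((2 * b) ^ 3 / (8192 * l ^ 10)) := by gcongr
      _ = D * (b ^ 3 / (1024 * (l ^ 2) ^ 5)) := by ring
      _ ≤ _ := h
      _ ≤ _ := by gcongr
  rw [mul_div_assoc', div_le_iff₀ (by positivity)] at h1
  refine le_of_mul_le_mul_right ?_ (by positivity : 0 < n ^ 3)
  refine h1.trans ?_
  calc (l ^ j) ^ 3 * (10 * (l * n)) ^ 4 * (8192 * l ^ 10)
      = 81920000 * (l ^ (3 * j) * l ^ 14 * n ^ 4) := by rw [mul_comm 3 j, pow_mul]; ring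
    _ ≤ l ^ 2 * (l ^ (3 * j) * l ^ 14 * n ^ 4) := by
        gcongr
        nlinarith
    _ = _ := by rw [pow_add]; ring

lemma trM (δ l a : ℝ) (hl0 : 0 < l) (ha : 1 ≤ l * |a|) (x y z w : ℝ)
    (h : ⌊a * x ^ 2 / δ⌋ - ⌊a * y ^ 2 / δ⌋ = ⌊a * z ^ 2 / δ⌋ - ⌊a * w ^ 2 / δ⌋) :
    |(⌊x ^ 2 / δ⌋ - ⌊y ^ 2 / δ⌋) - (⌊z ^ 2 / δ⌋ - ⌊w ^ 2 / δ⌋)| ≤ ((⌈2 * l⌉₊ + 1 : ℕ) : ℤ) := by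
  refine int_abs_le _ _ ?_
  have h0 : ((⌊a * x ^ 2 / δ⌋ : ℝ) - ⌊a * y ^ 2 / δ⌋) = (⌊a * z ^ 2 / δ⌋ : ℝ) - ⌊a * w ^ 2 / δ⌋ := by
    exact_mod_cast h
  have h2 : |a * x ^ 2 / δ - a * y ^ 2 / δ - (a * z ^ 2 / δ - a * w ^ 2 / δ)| ≤ 2 := by
    rw [abs_le]
    constructor <;> linarith [Int.floor_le (a * x ^ 2 / δ), Int.lt_floor_add_one (a * x ^ 2 / δ),
      Int.floor_le (a * y ^ 2 / δ), Int.lt_floor_add_one (a * y ^ 2 / δ), Int.floor_le (a * z ^ 2 / δ),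
      Int.lt_floor_add_one (a * z ^ 2 / δ), Int.floor_le (a * w ^ 2 / δ), Int.lt_floor_add_one (a * w ^ 2 / δ)]
  have e1 : a * x ^ 2 / δ - a * y ^ 2 / δ - (a * z ^ 2 / δ - a * w ^ 2 / δ) =
    a * (x ^ 2 / δ - y ^ 2 / δ - (z ^ 2 / δ - w ^ 2 / δ)) := by ring
  rw [e1, abs_mul] at h2
  have h3 : |x ^ 2 / δ - y ^ 2 / δ - (z ^ 2 / δ - w ^ 2 / δ)| ≤ 2 * l := by
    calc |x ^ 2 / δ - y ^ 2 / δ - (z ^ 2 / δ - w ^ 2 / δ)|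
        ≤ (l * |a|) * |x ^ 2 / δ - y ^ 2 / δ - (z ^ 2 / δ - w ^ 2 / δ)| :=
          le_mul_of_one_le_left (abs_nonneg _) ha
      _ = l * (|a| * |x ^ 2 / δ - y ^ 2 / δ - (z ^ 2 / δ - w ^ 2 / δ)|) := by ring
      _ ≤ l * 2 := mul_le_mul_of_nonneg_left h2 hl0.le
      _ = 2 * l := by ring
  have h4 := Nat.le_ceil (2 * l)
  rw [abs_le] at h3
  push_cast
  rw [abs_lt]
  constructor <;> linarith [Int.floor_le (x ^ 2 / δ), Int.lt_floor_add_one (x ^ 2 / δ),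
      Int.floor_le (y ^ 2 / δ), Int.lt_floor_add_one (y ^ 2 / δ), Int.floor_le (z ^ 2 / δ),
      Int.lt_floor_add_one (z ^ 2 / δ), Int.floor_le (w ^ 2 / δ), Int.lt_floor_add_one (w ^ 2 / δ), h3.1, h3.2]

lemma numl (l c : ℝ) (hl : 10000 ≤ l) (hc : c ≤ 2 * l + 1) : 2 * (c + 1) + 1 ≤ l ^ 2 := by nlinarith

set_option maxHeartbeats 2000000 in
lemma assemble (δ l s : ℝ) (hδ : 0 < δ) (hδ1 : δ ≤ 1) (hs0 : 0 < s) (hs1 : s < 1)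
    (hl : 10000 ≤ l) (a b C : ℝ) (hC : C ≤ l)
    (ha : 1 ≤ l * |a|) (hb : 1 ≤ l * |b|) (q : ℕ) (hq : 1 ≤ q * s)
    (hh : δ ^ ((1 - s) / 4) * ((l ^ (9 * q + 24)) ^ (32 * q + 240)) ^ (13 * q) ≤ 1)
    (A : Finset ℝ) (hA : (↑A : Set ℝ) ⊆ Set.Icc 0 1)
    (hsep : ∀ x ∈ A, ∀ y ∈ A, x ≠ y → δ ≤ |x - y|)
    (hn : (0:ℝ) < A.card) (hnd : (A.card : ℝ) * δ ^ s ≤ 2)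
    (hF : ∀ x t : ℝ, δ ≤ t →
      ((A.filter (fun u => u ∈ Set.Icc x (x + t))).card : ℝ) ≤ C * t ^ s * (A.card : ℝ))
    (G : Finset (ℝ × ℝ)) (hG : G ⊆ A ×ˢ A) (hGc : (A.card : ℝ) ^ 2 ≤ l * G.card)
    (h1 : (coverNum δ ((fun p : ℝ × ℝ => p.1 + p.2) '' (↑G : Set (ℝ × ℝ))) : ℝ) ≤ l * A.card)
    (h2 : (coverNum δ ((fun p : ℝ × ℝ => a * p.1 ^ 2 + b * p.2 ^ 2) '' (↑G : Set (ℝ × ℝ))) : ℝ) ≤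
      l * A.card) : False := by
  have hl0 : 0 < l := by linarith
  have hl1 : 1 ≤ l := by linarith
  have hq1 : 1 ≤ q := by
    rcases Nat.eq_zero_or_pos q with h0 | h0
    · rw [h0] at hq; norm_num at hq
    · exact h0
  have hA0 : ∀ x ∈ A, 0 ≤ x ∧ x ≤ 1 := fun x hx => hA hx
  set n : ℝ := (A.card : ℝ) with hnn
  set r := (l ^ (3 * q))⁻¹ with hr
  have hr0 : 0 < r := by positivity
  have hδr : δ ≤ r := by
    have h1 : δ ≤ δ ^ ((1 - s) / 4) := by
      calc δ = δ ^ (1:ℝ) := (Real.rpow_one _).symm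
        _ ≤ _ := Real.rpow_le_rpow_of_exponent_ge hδ hδ1 (by linarith)
    refine h1.trans ?_
    rw [hr, ← one_div, le_div_iff₀ (by positivity)]
    refine le_trans ?_ hh
    refine mul_le_mul_of_nonneg_left ?_ (by positivity)
    rw [← pow_mul, ← pow_mul]
    refine pow_le_pow_right₀ hl1 ?_
    calc 3 * q ≤ 1 * (1 * (13 * q)) := by omega
      _ ≤ _ := Nat.mul_le_mul (by omega) (Nat.mul_le_mul_right _ (by omega))
  have hrl : r ^ s * l ^ 3 ≤ 1 := by
    have e : l ^ 3 ≤ (l ^ (3 * q)) ^ s := by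
      rw [pow_mul, ← Real.rpow_natCast (l ^ 3) q, ← Real.rpow_mul (by positivity)]
      calc l ^ 3 = (l ^ 3) ^ (1:ℝ) := (Real.rpow_one _).symm
        _ ≤ _ := Real.rpow_le_rpow_of_exponent_le (one_le_pow₀ hl1) hq
    rw [hr, Real.inv_rpow (by positivity), inv_mul_le_iff₀ (by positivity), mul_one]
    exact e
  have hrs0 : 0 < r ^ s := by positivity
  set B := A.filter (fun x => r ≤ x) with hB
  set Bc := A.filter (fun x => ¬ r ≤ x) with hBc
  have hBB : (B.card : ℝ) + Bc.card = n := by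
    rw [hnn]; exact_mod_cast Finset.card_filter_add_card_filter_not (s := A) (fun x => r ≤ x)
  have hBcs : (Bc.card : ℝ) * l ^ 2 ≤ n := by
    have h3 : (Bc.card : ℝ) ≤ l * r ^ s * n := by
      calc (Bc.card : ℝ) ≤ ((A.filter (fun u => u ∈ Set.Icc 0 (0 + r))).card : ℝ) := by
            refine Nat.cast_le.2 (Finset.card_le_card ?_)
            intro x hx
            obtain ⟨g1, g2⟩ := Finset.mem_filter.1 hx
            push Not at g2
            exact Finset.mem_filter.2 ⟨g1, (hA0 x g1).1, by linarith⟩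
        _ ≤ C * r ^ s * n := hF 0 r hδr
        _ ≤ l * r ^ s * n := by gcongr
    calc (Bc.card : ℝ) * l ^ 2 ≤ (l * r ^ s * n) * l ^ 2 := by gcongr
      _ = (r ^ s * l ^ 3) * n := by ring
      _ ≤ 1 * n := by gcongr
      _ = n := one_mul n
  set G' := G.filter (fun p => p.1 ∈ B ∧ p.2 ∈ B) with hG'
  have hGG : (G.card : ℝ) ≤ G'.card + 2 * (Bc.card * n) := by
    have h3 : G ⊆ G' ∪ (Bc ×ˢ A ∪ A ×ˢ Bc) := by
      intro p hp
      have hpA := Finset.mem_product.1 (hG hp)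
      simp only [Finset.mem_union, Finset.mem_product, hG', hB, hBc, Finset.mem_filter]
      tauto
    have h4 := (Finset.card_le_card h3).trans ((Finset.card_union_le _ _).trans
      (Nat.add_le_add_left (Finset.card_union_le _ _) _))
    rw [Finset.card_product, Finset.card_product] at h4
    have h5 : (G.card : ℝ) ≤ G'.card + (Bc.card * A.card + A.card * Bc.card) := by exact_mod_cast h4
    rw [hnn]; linarith
  have hG'c : n ^ 2 ≤ l ^ 2 * G'.card := by
    have e1 : n ^ 2 * l ≤ l ^ 2 * G'.card + 2 * n ^ 2 := by
      calc n ^ 2 * l ≤ (l * (G'.card + 2 * (Bc.card * n))) * l := by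
            refine mul_le_mul_of_nonneg_right (hGc.trans ?_) hl0.le
            exact mul_le_mul_of_nonneg_left hGG hl0.le
        _ = l ^ 2 * G'.card + 2 * n * (Bc.card * l ^ 2) := by ring
        _ ≤ l ^ 2 * G'.card + 2 * n * n := by gcongr
        _ = _ := by ring
    nlinarith [sq_nonneg n]
  have hBn : (B.card : ℝ) ≤ n := by
    have : (0:ℝ) ≤ Bc.card := Nat.cast_nonneg _
    linarith
  have hBn2 : n ≤ 2 * B.card := by
    have : (0:ℝ) ≤ Bc.card := Nat.cast_nonneg _
    nlinarith
  have hBne : B.Nonempty := by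
    rw [← Finset.card_pos]
    have : (0:ℝ) < B.card := by linarith
    exact_mod_cast this
  have hG'B : G' ⊆ B ×ˢ B := by
    intro p hp
    exact Finset.mem_product.2 (Finset.mem_filter.1 hp).2
  obtain ⟨A', hA'B, hA'c, hpath⟩ := bsg_graph B G' hG'B (l ^ 2) (by positivity) hBne
    (le_trans (by gcongr) hG'c)
  have hBA : B ⊆ A := Finset.filter_subset _ _
  have hBr : ∀ x ∈ B, r ≤ x := fun x hx => (Finset.mem_filter.1 hx).2
  have hsepB : ∀ x ∈ B, ∀ y ∈ B, x ≠ y → δ ≤ |x - y| := fun x hx y hy => hsep x (hBA hx) y (hBA hy)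
  have hpath' : ∀ x ∈ A', ∀ x' ∈ A', (B.card : ℝ) ^ 3 / (1024 * (l ^ 2) ^ 5) ≤
      (((B ×ˢ B ×ˢ B).filter (fun p => (x, p.1) ∈ G' ∧ (p.2.1, p.1) ∈ G' ∧ (p.2.1, p.2.2) ∈ G' ∧
        (x', p.2.2) ∈ G')).card : ℝ) := by
    intro x hx x' hx'
    rw [div_le_iff₀ (by positivity)]
    have := hpath x hx x' hx'
    linarith
  -- N - N
  have hND := bsg_diff B A' G' (fun x => ⌊x / δ⌋) (fun x => ⌊x / δ⌋) 1
    (fun v => Finset.card_le_one.2 fun x hx y hy => floor_inj δ hδ B hsepB x y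
      (Finset.mem_filter.1 hx).1 (Finset.mem_filter.1 hy).1
      ((Finset.mem_filter.1 hx).2.trans (Finset.mem_filter.1 hy).2.symm))
    (fun v => Finset.card_le_one.2 fun x hx y hy => floor_inj δ hδ B hsepB x y
      (Finset.mem_filter.1 hx).1 (Finset.mem_filter.1 hy).1
      ((Finset.mem_filter.1 hx).2.trans (Finset.mem_filter.1 hy).2.symm)) _ hpath'
  have hGsub : G' ⊆ G := Finset.filter_subset _ _
  have hS1 : ((G'.image (fun p => ⌊p.1 / δ⌋ + ⌊p.2 / δ⌋)).card : ℝ) ≤ 10 * (l * n) := by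
    refine le_trans (Nat.cast_le.2 (Finset.card_le_card (Finset.image_subset_image hGsub))) ?_
    refine (sumimg δ hδ G (fun x => x) (fun x => x)).trans ?_
    linarith
  have hNN := arith_bsg l n B.card _ _ (1:ℕ) 0 hl hn hBn2 (Nat.cast_nonneg _) (Nat.cast_nonneg _) hS1
    (by norm_num) (by norm_num) hND
  -- P - P
  have hfib : ∀ c : ℝ, 1 ≤ l * |c| → ∀ v : ℤ,
      (B.filter (fun x => ⌊c * x ^ 2 / δ⌋ = v)).card ≤ ⌊l ^ (3 * q + 2)⌋₊ := by
    intro c hc v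
    refine Nat.le_floor ?_
    have h3 := fibre_le δ hδ B hsepB (fun x => ⌊c * x ^ 2 / δ⌋) (l ^ (3 * q + 1)) (one_le_pow₀ hl1) (by
      intro x hx y hy h
      have h2 := Int.abs_sub_lt_one_of_floor_eq_floor h
      rw [← sub_div, abs_div, abs_of_pos hδ, div_lt_one hδ] at h2
      have h3 : c * x ^ 2 - c * y ^ 2 = c * ((x - y) * (x + y)) := by ring
      have hxr := hBr x hx
      have hyr := hBr y hy
      rw [h3, abs_mul, abs_mul, abs_of_pos (by linarith : 0 < x + y)] at h2
      have e1 : r * l ^ (3 * q + 1) = l := by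
        rw [hr, pow_succ]; field_simp
      have e2 : |x - y| * r ≤ l * δ := by
        calc |x - y| * r ≤ |x - y| * (x + y) := mul_le_mul_of_nonneg_left (by linarith) (abs_nonneg _)
          _ ≤ (l * |c|) * (|x - y| * (x + y)) :=
              le_mul_of_one_le_left (mul_nonneg (abs_nonneg _) (by linarith)) hc
          _ = l * (|c| * (|x - y| * (x + y))) := by ring
          _ ≤ l * δ := mul_le_mul_of_nonneg_left h2.le hl0.le
      rw [← e1] at e2
      refine le_of_mul_le_mul_right ?_ hr0
      linarith) v
    refine h3.trans ?_
    rw [show 3 * q + 2 = (3 * q + 1) + 1 by ring, pow_succ l (3 * q + 1), mul_comm]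
    gcongr
    linarith
  have hPD := bsg_diff B A' G' (fun x => ⌊a * x ^ 2 / δ⌋) (fun x => ⌊b * x ^ 2 / δ⌋) _
    (hfib a ha) (hfib b hb) _ hpath'
  have hS2 : ((G'.image (fun p => ⌊a * p.1 ^ 2 / δ⌋ + ⌊b * p.2 ^ 2 / δ⌋)).card : ℝ) ≤ 10 * (l * n) := by
    refine le_trans (Nat.cast_le.2 (Finset.card_le_card (Finset.image_subset_image hGsub))) ?_
    refine (sumimg δ hδ G (fun x => a * x ^ 2) (fun x => b * x ^ 2)).trans ?_
    linarith
  have hPP := arith_bsg l n B.card _ _ _ (3 * q + 2) hl hn hBn2 (Nat.cast_nonneg _) (Nat.cast_nonneg _) hS2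
    (Nat.cast_nonneg _) (Nat.floor_le (by positivity)) hPD
  have htr := transfer (A' ×ˢ A') (fun p => ⌊a * p.1 ^ 2 / δ⌋ - ⌊a * p.2 ^ 2 / δ⌋)
    (fun p => ⌊p.1 ^ 2 / δ⌋ - ⌊p.2 ^ 2 / δ⌋) (⌈2 * l⌉₊ + 1) (by
      rintro ⟨x, y⟩ _ ⟨z, w⟩ _ h
      exact trM δ l a hl0 ha x y z w h)
  have htr' := (Nat.cast_le (α := ℝ)).2 htr
  push_cast at htr'
  have hceil := (Nat.ceil_lt_add_one (by positivity : 0 ≤ 2 * l)).le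
  have hMM : (((A' ×ˢ A').image (fun p => ⌊p.1 ^ 2 / δ⌋ - ⌊p.2 ^ 2 / δ⌋)).card : ℝ) ≤
      l ^ (9 * q + 24) * n := by
    refine htr'.trans ?_
    calc _ ≤ (l ^ (3 * (3 * q + 2) + 16) * n) * l ^ 2 := by
          refine mul_le_mul hPP ?_ (by positivity) (by positivity)
          exact numl l _ hl hceil
      _ = _ := by
          rw [show 9 * q + 24 = (3 * (3 * q + 2) + 16) + 2 by ring, pow_add l (3 * (3 * q + 2) + 16) 2]; ring
  have hlL : ∀ j, j ≤ 9 * q + 24 → l ^ j ≤ l ^ (9 * q + 24) := fun j hj => pow_le_pow_right₀ hl1 hj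
  have hlL1 : l ≤ l ^ (9 * q + 24) := by
    have := hlL 1 (by omega)
    rwa [pow_one] at this
  refine core δ (l ^ (9 * q + 24)) n s hδ hδ1 hs0 hs1 (by linarith) A' ?_ ?_ hn ?_ ?_ hnd ?_ ?_ hMM q hq hh
  · intro x hx
    refine ⟨?_, (hA0 x (hBA (hA'B hx))).2⟩
    refine le_trans ?_ (hBr x (hA'B hx))
    rw [hr, ← one_div]
    exact one_div_le_one_div_of_le (by positivity) (hlL _ (by omega))
  · exact fun x hx y hy => hsepB x (hA'B hx) y (hA'B hy)
  · calc n ≤ 2 * B.card := hBn2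
      _ ≤ 2 * (4 * l ^ 2 * A'.card) := by gcongr
      _ = 8 * (l ^ 2 * A'.card) := by ring
      _ ≤ l * (l ^ 2 * A'.card) := by gcongr; linarith
      _ = l ^ 3 * A'.card := by ring
      _ ≤ _ := mul_le_mul_of_nonneg_right (hlL 3 (by omega)) (Nat.cast_nonneg _)
  · exact le_trans (by exact_mod_cast Finset.card_le_card hA'B) hBn
  · intro x t ht
    have ht0 : 0 < t := by linarith
    calc _ ≤ ((A.filter (fun u => u ∈ Set.Icc x (x + t))).card : ℝ) :=
          Nat.cast_le.2 (Finset.card_le_card (Finset.filter_subset_filter _ (hA'B.trans hBA)))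
      _ ≤ _ := hF x t ht
      _ ≤ _ := by gcongr; linarith
  · refine hNN.trans ?_
    exact mul_le_mul_of_nonneg_right (hlL _ (by omega)) hn.le

end Helpers

/-- Theorem: for `0 < s < 1` there are `ε = ε(s) > 0` and `e = e(s) > 0` such that for all
nonzero `α, β` there is `K = K(α,β,s) > 0`, and for all `C ≥ 1` there is `δ₀ > 0`, such that
for all `0 < δ ≤ δ₀`, every δ-separated set `A ⊆ [0,1]` of cardinality `⌈δ^{-s}⌉` satisfying the
non-concentration bound `#(A ∩ I) ≤ C l^s #A` for intervals of length `l ≥ δ`, and every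
`G ⊆ A × A` with `#G ≥ δ^ε (#A)²`, satisfy
`E_δ(A +_G A) + E_δ({αx² + βy² : (x,y) ∈ G}) ≥ K C^{-e} δ^{-ε} #A`. -/
theorem covering_sum_product_jointly (s : ℝ) (hs0 : 0 < s) (hs1 : s < 1) :
    ∃ ε e : ℝ, 0 < ε ∧ 0 < e ∧
      ∀ (a b : ℝ), a ≠ 0 → b ≠ 0 →
        ∃ K : ℝ, 0 < K ∧
          ∀ C : ℝ, 1 ≤ C →
            ∃ δ₀ : ℝ, 0 < δ₀ ∧
              ∀ δ : ℝ, 0 < δ → δ ≤ δ₀ →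
                ∀ A : Finset ℝ, (↑A : Set ℝ) ⊆ Set.Icc 0 1 →
                  (∀ x ∈ A, ∀ y ∈ A, x ≠ y → δ ≤ |x - y|) →
                  A.card = ⌈δ ^ (-s)⌉₊ →
                  (∀ x l : ℝ, δ ≤ l →
                    ((A.filter (fun t => t ∈ Set.Icc x (x + l))).card : ℝ) ≤
                      C * l ^ s * (A.card : ℝ)) →
                  ∀ G : Finset (ℝ × ℝ), G ⊆ A ×ˢ A →
                    δ ^ ε * (A.card : ℝ) ^ 2 ≤ (G.card : ℝ) →
                    K * C ^ (-e) * δ ^ (-ε) * (A.card : ℝ) ≤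
                      (coverNum δ ((fun p : ℝ × ℝ => p.1 + p.2) '' (↑G : Set (ℝ × ℝ))) : ℝ) +
                        (coverNum δ
                          ((fun p : ℝ × ℝ => a * p.1 ^ 2 + b * p.2 ^ 2) ''
                            (↑G : Set (ℝ × ℝ))) : ℝ) := by
  set q : ℕ := ⌈1 / s⌉₊ with hqd
  have hq : 1 ≤ (q : ℝ) * s := by
    have := Nat.le_ceil (1 / s)
    rwa [div_le_iff₀ hs0] at this
  have hq1 : 0 < q := Nat.ceil_pos.2 (by positivity)
  set E : ℕ := (9 * q + 24) * (32 * q + 240) * (13 * q) with hE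
  have hE0 : 0 < E := by positivity
  have hER : (0:ℝ) < E := by exact_mod_cast hE0
  have hε : 0 < (1 - s) / 4 / E := by
    have : 0 < 1 - s := by linarith
    positivity
  have hεE : (1 - s) / 4 / E * E = (1 - s) / 4 := div_mul_cancel₀ _ hER.ne'
  generalize (1 - s) / 4 / (E : ℝ) = ε at hε hεE
  refine ⟨ε, 1, hε, one_pos, ?_⟩
  intro a b ha hb
  refine ⟨1, one_pos, ?_⟩
  intro C hC
  have ha0 : 0 < |a| := abs_pos.2 ha
  have hb0 : 0 < |b| := abs_pos.2 hb
  set W : ℝ := 10000 + C + 1 / |a| + 1 / |b| with hW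
  have hia : 0 < 1 / |a| := by positivity
  have hib : 0 < 1 / |b| := by positivity
  have hW0 : 0 < W := by linarith
  refine ⟨W ^ (-(1 / ε)), by positivity, ?_⟩
  intro δ hδ hδ0 A hA hsep hcard hF G hG hGc
  have hδ1 : δ ≤ 1 := by
    refine hδ0.trans ?_
    apply Real.rpow_le_one_of_one_le_of_nonpos (by linarith)
    have : 0 < 1 / ε := by positivity
    linarith
  set l : ℝ := δ ^ (-ε) with hl
  have hlW : W ≤ l := by
    have := Real.rpow_le_rpow_of_nonpos hδ hδ0 (by linarith : -ε ≤ 0)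
    rw [← Real.rpow_mul hW0.le] at this
    rw [show -(1 / ε) * -ε = 1 by field_simp, Real.rpow_one] at this
    exact this
  have hl0 : 0 < l := by linarith
  have hlδ : l * δ ^ ε = 1 := by
    rw [hl, ← Real.rpow_add hδ]; simp
  have hla : 1 ≤ l * |a| := by
    rw [← div_le_iff₀ ha0]; linarith
  have hlb : 1 ≤ l * |b| := by
    rw [← div_le_iff₀ hb0]; linarith
  have hds : 1 ≤ δ ^ (-s) := Real.one_le_rpow_of_pos_of_le_one_of_nonpos hδ hδ1 (by linarith)
  have hn1 : δ ^ (-s) ≤ (A.card : ℝ) := by rw [hcard]; exact Nat.le_ceil _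
  have hn2 : (A.card : ℝ) ≤ δ ^ (-s) + 1 := by
    rw [hcard]; exact (Nat.ceil_lt_add_one (by linarith)).le
  have hn : (0:ℝ) < A.card := by linarith
  have hds1 : δ ^ s ≤ 1 := Real.rpow_le_one hδ.le hδ1 hs0.le
  have hdd : δ ^ (-s) * δ ^ s = 1 := by rw [← Real.rpow_add hδ]; simp
  have hnd : (A.card : ℝ) * δ ^ s ≤ 2 := by
    calc (A.card : ℝ) * δ ^ s ≤ (δ ^ (-s) + 1) * δ ^ s :=
          mul_le_mul_of_nonneg_right hn2 (by positivity)
      _ = δ ^ (-s) * δ ^ s + δ ^ s := by ring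
      _ ≤ 2 := by linarith
  have hh : δ ^ ((1 - s) / 4) * ((l ^ (9 * q + 24)) ^ (32 * q + 240)) ^ (13 * q) ≤ 1 := by
    rw [← pow_mul, ← pow_mul, ← mul_assoc, ← hE, hl, ← Real.rpow_natCast (δ ^ (-ε)) E,
      ← Real.rpow_mul hδ.le, ← Real.rpow_add hδ, ← hεE]
    rw [show ε * (E:ℝ) + -ε * E = 0 by ring, Real.rpow_zero]
  by_contra hcon
  push Not at hcon
  have hCinv : C ^ (-1 : ℝ) ≤ 1 := Real.rpow_le_one_of_one_le_of_nonpos hC (by norm_num)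
  have hlt : 1 * C ^ (-1 : ℝ) * l * (A.card : ℝ) ≤ l * A.card := by
    rw [one_mul, mul_assoc]
    exact mul_le_of_le_one_left (by positivity) hCinv
  have hcon' := hcon.le.trans hlt
  refine assemble δ l s hδ hδ1 hs0 hs1 (by linarith) a b C (by linarith) hla hlb q hq hh A hA hsep
    hn hnd hF G hG ?_ ?_ ?_
  · calc (A.card : ℝ) ^ 2 = l * (δ ^ ε * (A.card : ℝ) ^ 2) := by rw [← mul_assoc, hlδ, one_mul]
      _ ≤ l * G.card := mul_le_mul_of_nonneg_left hGc hl0.le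
  · exact le_trans (le_add_of_nonneg_right (Nat.cast_nonneg _)) hcon'
  · exact le_trans (le_add_of_nonneg_left (Nat.cast_nonneg _)) hcon'
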